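/- arXiv:2012.05110 — 5 statements merged into one kernel-verified Lean document; each statement's English description precedes it below -/
import Mathlib

section
/- Let v : Λ → [0,∞) be pointwise nonnegative and let κ₀ > 0. Then for every p ∈ ℕ* and all x, y ∈ Λ^p, the reduced p-particle density matrices of the lattice Bose gas converge in the large-mass limit: lim_{ν→0⁺} (Γ_p^{ν,κ₀/ν,1})_{x,y} = (Γ_p^{lm})_{x,y}. -/
/-!
As `ν → 0⁺` the kinetic energy disappears and `e^{-H_n}` becomes multiplication by the interaction
factor, so both the numerator of `Γ_p` and the partition function `Ξ` converge to sums over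
configurations and permutations of particles at rest. These are then recognized as the loop sums that
define `Γ_p^{lm}`.

*Convergence.* Each term converges by continuity of the matrix exponential (`heat_symProj_tendsto`).
Since `v ≥ 0`, `-H_n` has nonnegative off-diagonal entries and nonpositive row sums, so the rows of
`e^{-H_n}` have `ℓ¹`-norm at most one (`matExp_row_sum_le_one`). This bounds the `n`-th term, uniformly
in `ν`, by a polynomial in `n` times `e^{-κ₀ n}` (`numTerm_bound`, `boundTerm_summable`), and dominated
convergence applies (`num_tendsto`). The partition function is the numerator with `p = 0`
(`grandXi_eq`).

*Identification.* All weights depend on a configuration only through its occupation number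
`N : Λ → ℕ`. The number of permutations carrying `X` to `Y` is `∏ₐ N(a)!` if both have occupation
number `N`, and zero otherwise (`permCount_eq`), and there are `n!/∏ₐ N(a)!` configurations of
occupation number `N`. The limiting numerator is therefore the number of permutations carrying `x` to
`y` times a sum over `M` weighted by `∏ₐ C(M(a), occ x a)`, and this product of binomial coefficients
counts the ways to put a loop of positive length on each `x_i` (`tsum_sources`,
`permutation_expansion`). On the other side, a gas of loops `(k, a)` with weights `1/k` gives total
weight one to each occupation number, because `exp (∑ₖ zᵏ/k) = ∑ₖ zᵏ` (`gasSum_loop`), so that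
`e^{-κ₀|k|} Z^{lm}(k,x)` is the sum over occupation numbers with source loops `(k, x)`
(`exp_mul_ZlmK`). The two sums agree (`GammaLm_eq`, `ZlmEmpty_eq`). The rearrangements are done in
`ℝ≥0∞`, where no summability is needed.
-/

open scoped BigOperators ComplexConjugate Classical Real Topology
open MeasureTheory Filter Matrix

noncomputable section

/-- The discrete torus `Λ = (ℤ/Lℤ)^d`. -/
abbrev Tor (d L : ℕ) := Fin d → ZMod L

/-- Configuration space `Λⁿ`. -/
abbrev Cfg (d L n : ℕ) := Fin n → Tor d L

/-- The unit vector `e j` in the torus. -/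
def unitVec (d L : ℕ) (j : Fin d) : Tor d L := fun i => if i = j then 1 else 0

/-- The discrete Laplacian on the torus, as a matrix:
`Δ f (x) = ∑_{j} (f (x + e_j) - f x) + (f (x - e_j) - f x)`. -/
def lap (d L : ℕ) [NeZero L] : Matrix (Tor d L) (Tor d L) ℂ :=
  fun x y =>
    (∑ j : Fin d,
      ((if y = x + unitVec d L j then (1 : ℂ) else 0)
        + (if y = x - unitVec d L j then (1 : ℂ) else 0)))
      - (if y = x then (2 * d : ℂ) else 0)

/-- Matrix exponential, defined entrywise via the exponential power series. -/
def matExp {m : Type*} [Fintype m] [DecidableEq m] (A : Matrix m m ℂ) : Matrix m m ℂ :=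
  Matrix.of fun x y => ∑' (n : ℕ), ((((Nat.factorial n : ℕ) : ℂ)⁻¹) • A ^ n) x y

/-- The Laplacian `Δ_i` acting in the `i`-th variable, summed over `i`, as a matrix on `ℓ²(Λⁿ)`. -/
def kin (d L n : ℕ) [NeZero L] : Matrix (Cfg d L n) (Cfg d L n) ℂ :=
  fun X Y => ∑ i : Fin n,
    (if ∀ j : Fin n, j ≠ i → X j = Y j then lap d L (X i) (Y i) else 0)

/-- The `n`-particle Hamiltonian
`H_n^{ν,λ} = -(ν/2) ∑_i Δ_i + (λ/2) ∑_{i,j} v(x_i - x_j)` on `ℓ²(Λⁿ)`. -/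
def ham (d L : ℕ) [NeZero L] (v : Tor d L → ℝ) (ν lam : ℝ) (n : ℕ) :
    Matrix (Cfg d L n) (Cfg d L n) ℂ :=
  ((-(ν / 2) : ℝ) : ℂ) • kin d L n
    + Matrix.diagonal (fun X : Cfg d L n =>
        (((lam / 2) * ∑ i : Fin n, ∑ j : Fin n, v (X i - X j) : ℝ) : ℂ))

/-- The symmetrization projection `P_n⁺` as a matrix on `ℓ²(Λⁿ)`. -/
def symProj (d L n : ℕ) [NeZero L] : Matrix (Cfg d L n) (Cfg d L n) ℂ :=
  fun X Y => ((Nat.factorial n : ℕ) : ℂ)⁻¹ * ∑ g : Equiv.Perm (Fin n), (if Y = X ∘ g then (1 : ℂ) else 0)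

/-- The grand canonical partition function
`Ξ^{ν,κ,λ} = ∑_{n ≥ 0} Tr(e^{-(H_n^{ν,λ} + κνn)} P_n⁺)`. -/
def grandXi (d L : ℕ) [NeZero L] (v : Tor d L → ℝ) (ν κ lam : ℝ) : ℂ :=
  ∑' (n : ℕ),
    (matExp (-(ham d L v ν lam n
        + ((κ * ν * n : ℝ) : ℂ) • (1 : Matrix (Cfg d L n) (Cfg d L n) ℂ)))
      * symProj d L n).trace

/-- The relative grand canonical partition function `𝒵^{ν,κ,λ} = Ξ^{ν,κ,λ}/Ξ^{ν,κ,0}`. -/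
def relZ (d L : ℕ) [NeZero L] (v : Tor d L → ℝ) (ν κ lam : ℝ) : ℂ :=
  grandXi d L v ν κ lam / grandXi d L v ν κ 0

/-- The kernel of the reduced `p`-particle density matrix `Γ_p^{ν,κ,λ}`. -/
def GammaQ (d L : ℕ) [NeZero L] (v : Tor d L → ℝ) (ν κ lam : ℝ) (p : ℕ)
    (x y : Fin p → Tor d L) : ℂ :=
  (grandXi d L v ν κ lam)⁻¹ *
    ∑' (n : ℕ),
      ((Nat.factorial (p + n) : ℂ) / (Nat.factorial n : ℂ))
        * ((Real.exp (-(κ * ν * (p + n))) : ℝ) : ℂ)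
        * ∑ u : Cfg d L n,
            (matExp (-(ham d L v ν lam (p + n))) * symProj d L (p + n))
              (Fin.append x u) (Fin.append y u)

/-- The large-mass interaction `V^{lm}(k,x) = (1/2) ∑_{i,j} k_i k_j v(x_i - x_j)`. -/
def Vlm (d L : ℕ) [NeZero L] (v : Tor d L → ℝ) (n : ℕ) (k : Fin n → ℕ+)
    (x : Cfg d L n) : ℝ :=
  (1 / 2) * ∑ i : Fin n, ∑ j : Fin n, ((k i : ℕ) : ℝ) * ((k j : ℕ) : ℝ) * v (x i - x j)

/-- The large-mass partition function with sources,
`Z^{lm}(k,x) = ∑_{n≥0} (1/n!) ∑_{k̃∈(ℕ*)ⁿ} (∏ 1/k̃_i) ∑_{x̃} e^{-κ₀|k̃|} e^{-V^{lm}((k,k̃),(x,x̃))}`. -/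
def ZlmK (d L : ℕ) [NeZero L] (v : Tor d L → ℝ) (κ₀ : ℝ) (p : ℕ)
    (k : Fin p → ℕ+) (x : Cfg d L p) : ℂ :=
  ∑' (n : ℕ), ((Nat.factorial n : ℕ) : ℂ)⁻¹ *
    ∑' (kt : Fin n → ℕ+), (∏ i : Fin n, (((kt i : ℕ) : ℕ) : ℂ)⁻¹) *
      ∑ xt : Cfg d L n,
        ((Real.exp (-(κ₀ * ∑ i : Fin n, ((kt i : ℕ) : ℝ)))
          * Real.exp (-(Vlm d L v (p + n) (Fin.append k kt) (Fin.append x xt))) : ℝ) : ℂ)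

/-- `Z^{lm} = Z^{lm}(∅)`. -/
def ZlmEmpty (d L : ℕ) [NeZero L] (v : Tor d L → ℝ) (κ₀ : ℝ) : ℂ :=
  ZlmK d L v κ₀ 0 (fun i => i.elim0) (fun i => i.elim0)

/-- The large-mass correlation function `(Γ_p^{lm})_{x,y}`. -/
def GammaLm (d L : ℕ) [NeZero L] (v : Tor d L → ℝ) (κ₀ : ℝ) (p : ℕ)
    (x y : Fin p → Tor d L) : ℂ :=
  ∑' (k : Fin p → ℕ+), ∑ g : Equiv.Perm (Fin p),
    ((Real.exp (-(κ₀ * ∑ i : Fin p, ((k i : ℕ) : ℝ))) : ℝ) : ℂ)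
      * (∏ i : Fin p, (if y (g i) = x i then (1 : ℂ) else 0))
      * (ZlmK d L v κ₀ p k x / ZlmEmpty d L v κ₀)

open scoped ENNReal Nat

/-! ### Gases of independent objects -/

/-- The `n`-object term of a gas: the sum over `n`-tuples of objects in `β` of the product of their
weights `w`, times `F` of the total of their contributions `s` in the additive monoid `M`. -/
def gasTerm {β M : Type*} [AddCommMonoid M] (w : β → ℝ≥0∞) (s : β → M) (n : ℕ)
    (F : M → ℝ≥0∞) : ℝ≥0∞ :=
  ∑' q : Fin n → β, (∏ i, w (q i)) * F (∑ i, s (q i))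

/-- The gas sum `∑ₙ (1/n!) ∑_{q ∈ βⁿ} (∏ w(q_i)) F(∑ s(q_i))`. It takes values in `ℝ≥0∞`, so that
sums may be rearranged freely. -/
def gasSum {β M : Type*} [AddCommMonoid M] (w : β → ℝ≥0∞) (s : β → M)
    (F : M → ℝ≥0∞) : ℝ≥0∞ :=
  ∑' n : ℕ, ((n ! : ℕ) : ℝ≥0∞)⁻¹ * gasTerm w s n F

/-- Writing `ℓ` of the total as a sum over the objects, each of the `n + 1` summands gives the same
term, by singling out the object concerned. -/
lemma gasTerm_weighted_succ {β M : Type*} [AddCommMonoid M] (w : β → ℝ≥0∞) (s : β → M)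
    (ℓ : M →+ ℕ) (n : ℕ) (F : M → ℝ≥0∞) :
    gasTerm w s (n + 1) (fun m => (ℓ m : ℝ≥0∞) * F m)
      = (n + 1 : ℕ) * ∑' b, (w b * ℓ (s b)) * gasTerm w s n (fun m => F (s b + m)) := by
  have h1 : gasTerm w s (n + 1) (fun m => (ℓ m : ℝ≥0∞) * F m)
      = ∑ i : Fin (n + 1), ∑' q : Fin (n + 1) → β,
          (ℓ (s (q i)) : ℝ≥0∞) * ((∏ j, w (q j)) * F (∑ j, s (q j))) := by
    rw [← Summable.tsum_finsetSum (fun _ _ => ENNReal.summable)]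
    refine tsum_congr fun q => ?_
    rw [← Finset.sum_mul]
    beta_reduce
    rw [map_sum]
    push_cast
    ring
  have h2 : ∀ i : Fin (n + 1), ∑' q : Fin (n + 1) → β,
          (ℓ (s (q i)) : ℝ≥0∞) * ((∏ j, w (q j)) * F (∑ j, s (q j)))
        = ∑' b, (w b * ℓ (s b)) * gasTerm w s n (fun m => F (s b + m)) := by
    intro i
    -- split off the `i`-th coordinate of the tuple
    rw [← (Fin.insertNthEquiv (fun _ => β) i).tsum_eq, ENNReal.tsum_prod']
    refine tsum_congr fun b => ?_
    rw [gasTerm, ← ENNReal.tsum_mul_left]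
    refine tsum_congr fun q => ?_
    rw [Fin.prod_univ_succAbove _ i, Fin.sum_univ_succAbove _ i]
    simp
    ring
  rw [h1, Finset.sum_congr rfl fun i _ => h2 i]
  simp

/-- Differential recursion of the gas sum: inserting the additive observable `ℓ` amounts to singling
out one object. -/
lemma gasSum_weighted {β M : Type*} [AddCommMonoid M] (w : β → ℝ≥0∞) (s : β → M)
    (ℓ : M →+ ℕ) (F : M → ℝ≥0∞) :
    gasSum w s (fun m => (ℓ m : ℝ≥0∞) * F m)
      = ∑' b, (w b * ℓ (s b)) * gasSum w s (fun m => F (s b + m)) := by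
  rw [gasSum, tsum_eq_zero_add' ENNReal.summable]
  have h0 : gasTerm w s 0 (fun m => (ℓ m : ℝ≥0∞) * F m) = 0 := by
    simp [gasTerm]
  rw [h0, mul_zero, zero_add]
  simp only [gasSum, ← ENNReal.tsum_mul_left]
  rw [ENNReal.tsum_comm]
  refine tsum_congr fun n => ?_
  rw [gasTerm_weighted_succ, ← ENNReal.tsum_mul_left, ← ENNReal.tsum_mul_left]
  refine tsum_congr fun b => ?_
  have : (((n + 1)! : ℕ) : ℝ≥0∞)⁻¹ * ((n + 1 : ℕ) : ℝ≥0∞) = ((n ! : ℕ) : ℝ≥0∞)⁻¹ := by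
    rw [Nat.factorial_succ, Nat.cast_mul, ENNReal.mul_inv (by simp) (by simp), mul_comm, ← mul_assoc,
      ENNReal.mul_inv_cancel (by simp) (by simp), one_mul]
  rw [← mul_assoc, this]
  ring

/-- A gas sum is determined by the values on indicators of single points of `M`. -/
lemma gasSum_eq_tsum {β M : Type*} [AddCommMonoid M] [DecidableEq M] (w : β → ℝ≥0∞) (s : β → M)
    (F : M → ℝ≥0∞) :
    gasSum w s F = ∑' m, F m * gasSum w s (fun m' => if m' = m then 1 else 0) := by
  have hF : ∀ m', F m' = ∑' m, F m * (if m' = m then 1 else 0) := by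
    intro m'
    rw [tsum_eq_single m' (by intro b hb; simp [hb.symm])]
    simp
  simp only [gasSum, gasTerm, ← ENNReal.tsum_mul_left]
  rw [ENNReal.tsum_comm]
  refine tsum_congr fun n => ?_
  rw [ENNReal.tsum_comm]
  refine tsum_congr fun q => ?_
  conv_lhs => rw [hF, ← ENNReal.tsum_mul_left, ← ENNReal.tsum_mul_left]
  refine tsum_congr fun m => ?_
  ring

/-- The total number of particles `∑ₐ N(a)` of an occupation number, as an additive map. -/
def totalOcc (α : Type*) [Fintype α] : (α → ℕ) →+ ℕ where
  toFun N := ∑ a, N a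
  map_zero' := by simp
  map_add' := by intro a b; simp [Finset.sum_add_distrib]

/-- The weight `1/k` of a loop `(k, a)`, that is, a cycle of `k` particles sitting at the site `a`. -/
def loopWeight (α : Type*) (b : ℕ+ × α) : ℝ≥0∞ := ((b.1 : ℕ) : ℝ≥0∞)⁻¹

/-- The occupation number of a loop `(k, a)`: `k` particles at the site `a`, none elsewhere. -/
def loopOcc {α : Type*} [DecidableEq α] (b : ℕ+ × α) : α → ℕ := Pi.single b.2 (b.1 : ℕ)

lemma totalOcc_loopOcc {α : Type*} [Fintype α] [DecidableEq α] (b : ℕ+ × α) :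
    totalOcc α (loopOcc b) = b.1 := by
  simp [totalOcc, loopOcc]

/-- The loops whose total occupation number is `N` have total weight exactly one. At a single site
this is the expansion of `exp (∑ₖ zᵏ/k) = 1/(1 - z)`. The proof is by induction on `|N|`: by
`gasSum_weighted` with the total particle number, `|N|` times the sum in question is the number of
loops `(k, a)` with `k ≤ N(a)`, which is `|N|`. -/
lemma gasSum_loop_indicator {α : Type*} [Fintype α] [DecidableEq α] (N : α → ℕ) :
    gasSum (loopWeight α) loopOcc (fun m => if m = N then 1 else 0) = 1 := by
  induction h : totalOcc α N using Nat.strong_induction_on generalizing N with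
  | _ t ih =>
  rcases Nat.eq_zero_or_pos t with ht | ht
  · have hN : N = 0 := by
      ext a
      have : ∑ a, N a = 0 := by rw [← ht, ← h]; rfl
      simpa using (Finset.sum_eq_zero_iff.mp this) a (Finset.mem_univ a)
    subst hN
    rw [gasSum, tsum_eq_single 0]
    · simp [gasTerm]
    · intro n hn
      have : gasTerm (loopWeight α) loopOcc n (fun m => if m = 0 then 1 else 0) = 0 := by
        rw [gasTerm, ENNReal.tsum_eq_zero]
        intro q
        rw [if_neg, mul_zero]
        intro h0
        have h1 := congrArg (totalOcc α) h0
        rw [map_sum, map_zero, Finset.sum_eq_zero_iff] at h1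
        have := h1 ⟨0, Nat.pos_of_ne_zero hn⟩ (Finset.mem_univ _)
        rw [totalOcc_loopOcc] at this
        exact (PNat.ne_zero _) this
      rw [this, mul_zero]
  · have key := gasSum_weighted (loopWeight α) loopOcc (totalOcc α)
      (fun m => if m = N then 1 else 0)
    have hl : gasSum (loopWeight α) loopOcc
        (fun m => (totalOcc α m : ℝ≥0∞) * (if m = N then 1 else 0))
        = t * gasSum (loopWeight α) loopOcc (fun m => if m = N then 1 else 0) := by
      rw [gasSum_eq_tsum, tsum_eq_single N]
      · simp [h]
      · intro b hb; simp [hb]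
    have hw : ∀ b : ℕ+ × α, loopWeight α b * (totalOcc α (loopOcc b) : ℕ) = 1 := by
      intro b
      rw [totalOcc_loopOcc, loopWeight]
      exact ENNReal.inv_mul_cancel (by simp) (by simp)
    have hterm : ∀ b : ℕ+ × α, gasSum (loopWeight α) loopOcc
        (fun m => if loopOcc b + m = N then 1 else 0) = if (b.1 : ℕ) ≤ N b.2 then 1 else 0 := by
      intro b
      split_ifs with hb
      · have hle : loopOcc b ≤ N := by
          intro a
          rw [loopOcc, Pi.single_apply]
          split_ifs with ha
          · subst ha; exact hb
          · exact Nat.zero_le _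
        have hfun : (fun m => if loopOcc b + m = N then (1 : ℝ≥0∞) else 0)
            = fun m => if m = N - loopOcc b then 1 else 0 := by
          funext m
          refine if_congr ?_ rfl rfl
          constructor
          · rintro rfl; simp
          · rintro rfl; exact add_tsub_cancel_of_le hle
        rw [hfun]
        have htot : totalOcc α (N - loopOcc b) + b.1 = t := by
          rw [← totalOcc_loopOcc b, ← map_add, tsub_add_cancel_of_le hle, h]
        have := b.1.pos
        exact ih _ (by omega) _ rfl
      · have hfun : (fun m => if loopOcc b + m = N then (1 : ℝ≥0∞) else 0) = fun m => 0 := by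
          funext m
          rw [if_neg]
          rintro rfl
          apply hb
          simp [loopOcc]
        rw [hfun]
        simp [gasSum, gasTerm]
    rw [hl] at key
    simp only [hw, hterm, one_mul] at key
    have hsum : ∑' b : ℕ+ × α, (if (b.1 : ℕ) ≤ N b.2 then (1 : ℝ≥0∞) else 0) = t := by
      rw [ENNReal.tsum_prod', ENNReal.tsum_comm, tsum_fintype, ← h]
      have : ((totalOcc α N : ℕ) : ℝ≥0∞) = ∑ a, (N a : ℝ≥0∞) := by simp [totalOcc]
      rw [this]
      refine Finset.sum_congr rfl fun a _ => ?_
      rw [tsum_pnat_eq_tsum_succ (f := fun n => if n ≤ N a then (1 : ℝ≥0∞) else 0)]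
      rw [tsum_eq_sum (s := Finset.range (N a))]
      · rw [Finset.sum_congr rfl (g := fun _ => 1)]
        · simp
        · intro i hi
          have := Finset.mem_range.mp hi
          exact if_pos (by omega)
      · intro i hi
        have := Finset.mem_range.not.mp hi
        exact if_neg (by omega)
    rw [hsum] at key
    have ht' : (t : ℝ≥0∞) ≠ 0 := by exact_mod_cast ht.ne'
    have := (ENNReal.mul_right_inj ht' (ENNReal.natCast_ne_top t)).mp (key.trans (mul_one _).symm)
    exact this

/-- Summing over the loop gas is the same as summing over occupation numbers. -/
lemma gasSum_loop {α : Type*} [Fintype α] [DecidableEq α] (F : (α → ℕ) → ℝ≥0∞) :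
    gasSum (loopWeight α) loopOcc F = ∑' N, F N := by
  rw [gasSum_eq_tsum]
  simp only [gasSum_loop_indicator, mul_one]

/-! ### Occupation numbers and permutations -/

lemma sum_range_choose_col (m r : ℕ) : ∑ i ∈ Finset.range m, i.choose r = m.choose (r + 1) := by
  induction m with
  | zero => simp
  | succ m ih => rw [Finset.sum_range_succ, ih, Nat.choose_succ_succ, add_comm]

/-- The hockey-stick identity, as a sum over the length `j` of one source loop. -/
lemma tsum_choose_sub (m r : ℕ) :
    ∑' j : ℕ+, (if (j : ℕ) ≤ m then ((m - j).choose r : ℝ≥0∞) else 0) = m.choose (r + 1) := by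
  rw [tsum_pnat_eq_tsum_succ (f := fun j => if j ≤ m then ((m - j).choose r : ℝ≥0∞) else 0),
    tsum_eq_sum (s := Finset.range m), ← sum_range_choose_col, ← Finset.sum_range_reflect]
  · push_cast
    refine Finset.sum_congr rfl fun i hi => ?_
    have := Finset.mem_range.mp hi
    rw [if_pos (by omega), show m - (m - 1 - i + 1) = i by omega]
  · intro i hi
    have := Finset.mem_range.not.mp hi
    exact if_neg (by omega)

/-- The occupation number of a configuration: `occ x a` is the number of `i` with `x i = a`. -/
def occ {α : Type*} [DecidableEq α] {n : ℕ} (x : Fin n → α) : α → ℕ :=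
  ∑ i, Pi.single (x i) 1

lemma occ_apply {α : Type*} [DecidableEq α] {n : ℕ} (x : Fin n → α) (a : α) :
    occ x a = Fintype.card {i // x i = a} := by
  simp [occ, Fintype.card_subtype, Pi.single_apply, Finset.sum_boole, eq_comm]

lemma occ_append {α : Type*} [DecidableEq α] {p n : ℕ} (x : Fin p → α) (u : Fin n → α) :
    occ (Fin.append x u) = occ x + occ u := by
  simp [occ, Fin.sum_univ_add]

lemma totalOcc_occ {α : Type*} [Fintype α] [DecidableEq α] {n : ℕ} (x : Fin n → α) :
    totalOcc α (occ x) = n := by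
  simp [occ, map_sum, totalOcc]

lemma tsum_shift {α : Type*} (l : α → ℕ) (H : (α → ℕ) → (α → ℕ) → ℝ≥0∞) :
    ∑' M, H M (l + M) = ∑' M', if l ≤ M' then H (M' - l) M' else 0 := by
  have hinj : Function.Injective (fun M : α → ℕ => l + M) := fun a b h => by simpa using h
  rw [← hinj.tsum_eq (f := fun M' => if l ≤ M' then H (M' - l) M' else 0)]
  · refine tsum_congr fun M => ?_
    have hle : l ≤ l + M := le_self_add
    simp [hle]
  · intro M' hM'
    simp only [Function.mem_support, ne_eq, ite_eq_right_iff, Classical.not_imp] at hM'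
    exact ⟨M' - l, add_tsub_cancel_of_le hM'.1⟩

lemma loopOcc_le_iff {α : Type*} [DecidableEq α] (j : ℕ+) (a : α) (M : α → ℕ) :
    loopOcc (j, a) ≤ M ↔ (j : ℕ) ≤ M a := by
  constructor
  · intro h
    simpa [loopOcc] using h a
  · intro h b
    rw [loopOcc, Pi.single_apply]
    split_ifs with hb
    · subst hb; exact h
    · exact Nat.zero_le _

/-- Summing over the lengths of source loops at `x_1, …, x_p` weights a total occupation number `M`
by `∏ₐ C(M(a), occ x a)`: the decompositions of `M(a)` into `occ x a` positive parts and a remainder. -/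
lemma tsum_sources {α : Type*} [Fintype α] [DecidableEq α] (p : ℕ) (x : Fin p → α)
    (G : (α → ℕ) → ℝ≥0∞) :
    ∑' k : Fin p → ℕ+, ∑' N, G (∑ i, loopOcc (k i, x i) + N)
      = ∑' M : α → ℕ, ((∏ a, (M a).choose (occ x a) : ℕ) : ℝ≥0∞) * G M := by
  induction p generalizing G with
  | zero =>
    rw [tsum_eq_single (fun i => i.elim0) (by intro b hb; exact absurd (Subsingleton.elim _ _) hb)]
    simp [occ]
  | succ p ih =>
    rw [← (Fin.insertNthEquiv (fun _ => ℕ+) 0).tsum_eq, ENNReal.tsum_prod']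
    have h1 : ∀ j : ℕ+, ∑' (k : Fin p → ℕ+), ∑' N, G (∑ i, loopOcc
          ((Fin.insertNthEquiv (fun _ => ℕ+) 0) (j, k) i, x i) + N)
        = ∑' M : α → ℕ, ((∏ a, (M a).choose (occ (x ∘ Fin.succ) a) : ℕ) : ℝ≥0∞)
            * G (loopOcc (j, x 0) + M) := by
      intro j
      rw [← ih (x ∘ Fin.succ) (fun M => G (loopOcc (j, x 0) + M))]
      refine tsum_congr fun k => tsum_congr fun N => ?_
      rw [Fin.sum_univ_succ]
      simp [add_assoc]
    simp only [h1]
    have h2 : ∀ j : ℕ+, ∑' M : α → ℕ, ((∏ a, (M a).choose (occ (x ∘ Fin.succ) a) : ℕ) : ℝ≥0∞)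
            * G (loopOcc (j, x 0) + M)
        = ∑' M : α → ℕ, (if loopOcc (j, x 0) ≤ M then
          ((∏ a, ((M - loopOcc (j, x 0)) a).choose (occ (x ∘ Fin.succ) a) : ℕ) : ℝ≥0∞) * G M
          else 0) := fun j => tsum_shift _ (fun M M' =>
            ((∏ a, (M a).choose (occ (x ∘ Fin.succ) a) : ℕ) : ℝ≥0∞) * G M')
    simp only [h2]
    rw [ENNReal.tsum_comm]
    refine tsum_congr fun M => ?_
    have hocc : occ x = Pi.single (x 0) 1 + occ (x ∘ Fin.succ) := by
      rw [occ, Fin.sum_univ_succ]; rfl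
    have h3 : ∀ j : ℕ+, (if loopOcc (j, x 0) ≤ M then
          ((∏ a, ((M - loopOcc (j, x 0)) a).choose (occ (x ∘ Fin.succ) a) : ℕ) : ℝ≥0∞) * G M
          else 0)
        = (if (j : ℕ) ≤ M (x 0) then ((M (x 0) - j).choose (occ (x ∘ Fin.succ) (x 0)) : ℝ≥0∞)
            else 0) * (((∏ a ∈ Finset.univ.erase (x 0),
              (M a).choose (occ (x ∘ Fin.succ) a) : ℕ) : ℝ≥0∞) * G M) := by
      intro j
      simp only [loopOcc_le_iff]
      split_ifs with hj
      · rw [← Finset.mul_prod_erase _ _ (Finset.mem_univ (x 0))]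
        have : ∏ a ∈ Finset.univ.erase (x 0),
            ((M - loopOcc (j, x 0)) a).choose (occ (x ∘ Fin.succ) a)
            = ∏ a ∈ Finset.univ.erase (x 0), (M a).choose (occ (x ∘ Fin.succ) a) := by
          refine Finset.prod_congr rfl fun a ha => ?_
          simp [loopOcc, Finset.ne_of_mem_erase ha]
        rw [this, Nat.cast_mul]
        simp [loopOcc, mul_assoc]
      · simp
    simp only [h3]
    rw [ENNReal.tsum_mul_right, tsum_choose_sub,
      ← Finset.mul_prod_erase Finset.univ (fun a => (M a).choose (occ x a)) (Finset.mem_univ (x 0))]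
    have : ∏ a ∈ Finset.univ.erase (x 0), (M a).choose (occ x a)
            = ∏ a ∈ Finset.univ.erase (x 0), (M a).choose (occ (x ∘ Fin.succ) a) := by
      refine Finset.prod_congr rfl fun a ha => ?_
      simp [hocc, Finset.ne_of_mem_erase ha]
    rw [this, Nat.cast_mul, hocc]
    simp [mul_assoc, add_comm]

/-- The number of permutations carrying the configuration `X` to `Y`; up to the factor `1/n!` this
is the kernel of the symmetrization projection. -/
def permCount {α : Type*} [DecidableEq α] {n : ℕ} (X Y : Fin n → α) : ℕ :=
  ∑ g : Equiv.Perm (Fin n), if Y = X ∘ g then 1 else 0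

lemma occ_comp_perm {α : Type*} [DecidableEq α] {n : ℕ} (X : Fin n → α) (g : Equiv.Perm (Fin n)) :
    occ (X ∘ g) = occ X := by
  unfold occ
  exact Equiv.sum_comp g (fun i => Pi.single (X i) 1)

/-- Configurations with equal occupation numbers differ by a permutation, glued together from
bijections of the fibres. -/
lemma exists_perm_of_occ_eq {α : Type*} [DecidableEq α] {n : ℕ} {X Y : Fin n → α}
    (h : occ X = occ Y) : ∃ g : Equiv.Perm (Fin n), Y = X ∘ g := by
  have e : ∀ a, {i // Y i = a} ≃ {i // X i = a} := fun a =>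
    Fintype.equivOfCardEq (by rw [← occ_apply, ← occ_apply, h])
  refine ⟨Equiv.ofFiberEquiv e, ?_⟩
  funext i
  exact (Equiv.ofFiberEquiv_map e i).symm

lemma permCount_self {α : Type*} [Fintype α] [DecidableEq α] {n : ℕ} (X : Fin n → α) :
    permCount X X = ∏ a, (occ X a)! := by
  simp only [occ_apply]
  rw [← DomMulAct.stabilizer_card X, permCount, Finset.sum_boole, Fintype.card_subtype]
  simp [eq_comm]

lemma permCount_eq {α : Type*} [Fintype α] [DecidableEq α] {n : ℕ} (X Y : Fin n → α) :
    permCount X Y = if occ X = occ Y then ∏ a, (occ X a)! else 0 := by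
  split_ifs with h
  · obtain ⟨g₀, rfl⟩ := exists_perm_of_occ_eq h
    rw [← permCount_self, permCount, permCount, ← Equiv.sum_comp (Equiv.mulRight g₀)]
    refine Finset.sum_congr rfl fun g _ => if_congr ?_ rfl rfl
    simp only [Equiv.coe_mulRight, Equiv.Perm.coe_mul, ← Function.comp_assoc]
    exact ⟨fun h => g₀.surjective.injective_comp_right h, fun h => by rw [← h]⟩
  · refine Finset.sum_eq_zero fun g _ => if_neg ?_
    rintro rfl
    exact h (occ_comp_perm X g).symm

lemma exists_occ_eq {α : Type*} [Fintype α] [DecidableEq α] {n : ℕ} {m : α → ℕ}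
    (h : totalOcc α m = n) : ∃ u : Fin n → α, occ u = m := by
  have e : Fin n ≃ (Σ a, Fin (m a)) := Fintype.equivOfCardEq (by simp [← h, totalOcc])
  refine ⟨fun i => (e i).1, ?_⟩
  funext a
  rw [occ_apply, Fintype.card_congr ((e.subtypeEquiv (q := fun s => s.1 = a) (fun i => Iff.rfl)).trans
    (Equiv.sigmaSubtype a)), Fintype.card_fin]

/-- Multinomial count: there are `n! / ∏ₐ m(a)!` configurations with occupation number `m`. -/
lemma sum_occ_factorial {α : Type*} [Fintype α] [DecidableEq α] (n : ℕ) (m : α → ℕ) :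
    ∑ u : Fin n → α, (if occ u = m then ∏ a, (m a)! else 0)
      = if totalOcc α m = n then n ! else 0 := by
  split_ifs with h
  · obtain ⟨u₀, rfl⟩ := exists_occ_eq h
    have : ∀ u : Fin n → α, (if occ u = occ u₀ then ∏ a, (occ u₀ a)! else 0) = permCount u₀ u := by
      intro u
      rw [permCount_eq]
      exact if_congr eq_comm rfl rfl
    simp only [this, permCount]
    rw [Finset.sum_comm]
    simp [Fintype.card_perm]
  · refine Finset.sum_eq_zero fun u _ => if_neg ?_
    rintro rfl
    exact h (totalOcc_occ u)

lemma sum_configurations {α : Type*} [Fintype α] [DecidableEq α] (n : ℕ)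
    (F : (α → ℕ) → ℝ≥0∞) :
    ∑ u : Fin n → α, ((∏ a, (occ u a)! : ℕ) : ℝ≥0∞) * F (occ u)
      = (n ! : ℕ) * ∑' m, if totalOcc α m = n then F m else 0 := by
  have h : ∀ u : Fin n → α, ((∏ a, (occ u a)! : ℕ) : ℝ≥0∞) * F (occ u)
      = ∑' m, ((if occ u = m then ∏ a, (m a)! else 0 : ℕ) : ℝ≥0∞) * F m := by
    intro u
    rw [tsum_eq_single (occ u) (by intro b hb; simp [hb.symm])]
    simp
  simp only [h]
  rw [← Summable.tsum_finsetSum (fun _ _ => ENNReal.summable), ← ENNReal.tsum_mul_left]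
  refine tsum_congr fun m => ?_
  rw [← Finset.sum_mul, ← Nat.cast_sum, sum_occ_factorial]
  split_ifs <;> simp

/-- Summing over configurations with the weight `(1/n!) ∏ₐ (occ u a)!` is the same as summing over
occupation numbers. -/
lemma tsum_configurations {α : Type*} [Fintype α] [DecidableEq α] (F : (α → ℕ) → ℝ≥0∞) :
    ∑' n : ℕ, ((n ! : ℕ) : ℝ≥0∞)⁻¹ *
      ∑ u : Fin n → α, ((∏ a, (occ u a)! : ℕ) : ℝ≥0∞) * F (occ u) = ∑' m, F m := by
  simp only [sum_configurations, ← mul_assoc]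
  have : ∀ n : ℕ, ((n ! : ℕ) : ℝ≥0∞)⁻¹ * ((n ! : ℕ) : ℝ≥0∞) = 1 := fun n =>
    ENNReal.inv_mul_cancel (by simp [Nat.factorial_ne_zero]) (by simp)
  simp only [this, one_mul]
  rw [ENNReal.tsum_comm]
  refine tsum_congr fun m => ?_
  rw [tsum_eq_single (totalOcc α m) (by intro b hb; simp [hb.symm])]
  simp

lemma choose_mul_factorials {α : Type*} [Fintype α] (r m : α → ℕ) :
    ∏ a, ((r + m) a)! = (∏ a, (m a)!) * ((∏ a, (r a)!) * ∏ a, ((r + m) a).choose (r a)) := by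
  rw [← Finset.prod_mul_distrib, ← Finset.prod_mul_distrib]
  refine Finset.prod_congr rfl fun a _ => ?_
  have := Nat.add_choose_mul_factorial_mul_factorial (r a) (m a)
  simp only [Pi.add_apply]
  rw [← this, ← Nat.choose_symm_add]
  ring

/-- The sum over permutations of `p` marked and `n` integrated particles, all at rest, equals the sum
over permutations of the marked particles alone, each carrying a source loop of arbitrary length, in a
bath of free occupation numbers. -/
lemma permutation_expansion {α : Type*} [Fintype α] [DecidableEq α] (p : ℕ) (x y : Fin p → α)
    (G : (α → ℕ) → ℝ≥0∞) :
    ∑' n : ℕ, ((n ! : ℕ) : ℝ≥0∞)⁻¹ * ∑ u : Fin n → α,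
        (permCount (Fin.append x u) (Fin.append y u) : ℝ≥0∞) * G (occ (Fin.append x u))
      = (permCount x y : ℝ≥0∞) * ∑' k : Fin p → ℕ+, ∑' N, G (∑ i, loopOcc (k i, x i) + N) := by
  rw [tsum_sources, permCount_eq]
  simp only [permCount_eq, occ_append, add_left_inj]
  split_ifs with h
  · simp only [choose_mul_factorials, Nat.cast_mul, mul_assoc]
    rw [tsum_configurations (fun m : α → ℕ => ((∏ a, (occ x a)! : ℕ) : ℝ≥0∞) *
      (((∏ a, ((occ x + m : α → ℕ) a).choose (occ x a) : ℕ) : ℝ≥0∞) * G (occ x + m))),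
      ENNReal.tsum_mul_left, tsum_shift (occ x) (fun _ M =>
      ((∏ a, (M a).choose (occ x a) : ℕ) : ℝ≥0∞) * G M)]
    congr 1
    refine tsum_congr fun M => ?_
    split_ifs with hM
    · rfl
    · -- if `occ x ≤ M` fails, one of the binomial coefficients vanishes
      simp only [Pi.le_def, not_forall, not_le] at hM
      obtain ⟨a, ha⟩ := hM
      rw [Finset.prod_eq_zero (Finset.mem_univ a) (Nat.choose_eq_zero_of_lt ha)]
      simp
  · simp

/-! ### The heat kernel -/

section MatrixNorm
attribute [local instance] Matrix.linftyOpNormedRing Matrix.linftyOpNormedAlgebra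
  Matrix.linftyOpNormedAddCommGroup

/-- The entrywise exponential series agrees with the exponential of the Banach algebra of matrices. -/
lemma matExp_eq_exp {m : Type*} [Fintype m] [DecidableEq m] (A : Matrix m m ℂ) :
    matExp A = NormedSpace.exp A := by
  have h := NormedSpace.exp_series_hasSum_exp' (𝕂 := ℂ) A
  ext x y
  exact (Pi.hasSum.mp (Pi.hasSum.mp h x) y).tsum_eq

lemma continuous_matExp {m : Type*} [Fintype m] [DecidableEq m] :
    Continuous (matExp : Matrix m m ℂ → Matrix m m ℂ) := by
  have : (matExp : Matrix m m ℂ → Matrix m m ℂ) = NormedSpace.exp := funext matExp_eq_exp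
  rw [this]
  let _ : NormedAlgebra ℚ (Matrix m m ℂ) := NormedAlgebra.restrictScalars ℚ ℂ _
  exact NormedSpace.exp_continuous

lemma norm_matExp_le {m : Type*} [Fintype m] [DecidableEq m] [Nonempty m] (A : Matrix m m ℂ) :
    ‖matExp A‖ ≤ Real.exp ‖A‖ := by
  have h : HasSum (fun n : ℕ => ((n ! : ℂ)⁻¹) • A ^ n) (matExp A) := by
    rw [matExp_eq_exp]
    exact NormedSpace.exp_series_hasSum_exp' (𝕂 := ℂ) A
  have h' := NormedSpace.exp_series_hasSum_exp' (𝕂 := ℝ) ‖A‖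
  rw [← h.tsum_eq, Real.exp_eq_exp_ℝ]
  refine tsum_of_norm_bounded h' fun n => ?_
  rw [norm_smul]
  simp only [norm_inv, Complex.norm_natCast, smul_eq_mul]
  gcongr
  exact norm_pow_le A n

lemma row_sum_le_norm {m : Type*} [Fintype m] (A : Matrix m m ℂ) (X : m) :
    ∑ Y, ‖A X Y‖ ≤ ‖A‖ := by
  rw [Matrix.linfty_opNorm_def]
  have := Finset.le_sup (f := fun i => ∑ j, ‖A i j‖₊) (Finset.mem_univ X)
  rw [← NNReal.coe_le_coe] at this
  simpa using this

lemma matExp_add_smul_one {m : Type*} [Fintype m] [DecidableEq m] (A : Matrix m m ℂ) (c : ℂ) :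
    matExp (A + c • (1 : Matrix m m ℂ)) = Complex.exp c • matExp A := by
  rw [matExp_eq_exp, matExp_eq_exp, Matrix.exp_add_of_commute _ _
    ((Commute.one_right A).smul_right c), Matrix.smul_one_eq_diagonal, Matrix.exp_diagonal]
  ext x y
  simp [Matrix.mul_diagonal, Complex.exp_eq_exp_ℂ, mul_comm]

/-- A matrix with nonnegative off-diagonal entries and nonpositive row sums generates a sub-Markovian
semigroup: the shift `A + c` by a large constant has `ℓ^∞`-operator norm at most `c`, hence
`‖e^A‖ ≤ e^{-c} e^c = 1`. -/
lemma matExp_row_sum_le_one {m : Type*} [Fintype m] [DecidableEq m] [Nonempty m]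
    (A : Matrix m m ℂ) (a : m → m → ℝ) (hA : ∀ X Y, A X Y = a X Y)
    (hoff : ∀ X Y, X ≠ Y → 0 ≤ a X Y) (hrow : ∀ X, ∑ Y, a X Y ≤ 0) (X : m) :
    ∑ Y, ‖matExp A X Y‖ ≤ 1 := by
  -- any `c` dominating all diagonal entries makes `A + c` entrywise nonnegative
  set c : ℝ := ∑ Z, |a Z Z| with hc
  set B : Matrix m m ℂ := A + (c : ℂ) • 1 with hB
  have hBnorm : ‖B‖ ≤ c := by
    have hc0 : 0 ≤ c := Finset.sum_nonneg fun _ _ => abs_nonneg _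
    rw [Matrix.linfty_opNorm_def]
    refine NNReal.coe_le_coe (r₂ := ⟨c, hc0⟩).mpr (Finset.sup_le fun Z _ => ?_)
    suffices h : ((∑ j, ‖B Z j‖₊ : NNReal) : ℝ) ≤ c from h
    push_cast
    have hentry : ∀ Y, ‖B Z Y‖ = a Z Y + if Z = Y then (c : ℝ) else 0 := by
      intro Y
      have h1 : B Z Y = ((a Z Y + if Z = Y then (c : ℝ) else 0 : ℝ) : ℂ) := by
        simp only [hB, Matrix.add_apply, Matrix.smul_apply, hA, Matrix.one_apply]
        split_ifs <;> simp
      rw [h1, Complex.norm_real, Real.norm_of_nonneg]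
      split_ifs with h
      · subst h
        have h2 : |a Z Z| ≤ ∑ Z, |a Z Z| :=
          Finset.single_le_sum (f := fun Z => |a Z Z|) (fun _ _ => abs_nonneg _)
            (Finset.mem_univ Z)
        have := neg_abs_le (a Z Z)
        linarith
      · simpa using hoff Z Y h
    simp only [hentry, Finset.sum_add_distrib]
    have := hrow Z
    simpa using this
  have hAB : A = B + (-(c : ℂ)) • 1 := by simp [hB]
  have h1 : ∑ Y, ‖matExp A X Y‖ = Real.exp (-c) * ∑ Y, ‖matExp B X Y‖ := by
    rw [hAB, matExp_add_smul_one, Finset.mul_sum]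
    refine Finset.sum_congr rfl fun Y _ => ?_
    rw [Matrix.smul_apply, norm_smul, Complex.norm_exp]
    simp
  rw [h1]
  calc Real.exp (-c) * ∑ Y, ‖matExp B X Y‖ ≤ Real.exp (-c) * Real.exp c := by
        gcongr
        exact (row_sum_le_norm _ X).trans ((norm_matExp_le B).trans (Real.exp_le_exp.mpr hBnorm))
    _ = 1 := by rw [← Real.exp_add]; simp

end MatrixNorm

/-- The matrix entries of the lattice Laplacian `lap`, as real numbers. -/
def lapR (d L : ℕ) [NeZero L] (x y : Tor d L) : ℝ :=
  (∑ j : Fin d, ((if y = x + unitVec d L j then (1 : ℝ) else 0)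
        + (if y = x - unitVec d L j then (1 : ℝ) else 0)))
      - (if y = x then (2 * d : ℝ) else 0)

/-- The matrix entries of the kinetic operator `kin`, as real numbers. -/
def kinR (d L n : ℕ) [NeZero L] (X Y : Cfg d L n) : ℝ :=
  ∑ i : Fin n, (if ∀ j : Fin n, j ≠ i → X j = Y j then lapR d L (X i) (Y i) else 0)

lemma lap_eq (d L : ℕ) [NeZero L] (x y : Tor d L) : lap d L x y = lapR d L x y := by
  unfold lap lapR
  push_cast
  refine congrArg₂ _ (Finset.sum_congr rfl fun j _ => ?_) ?_ <;> split_ifs <;> simp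

lemma kin_eq (d L n : ℕ) [NeZero L] (X Y : Cfg d L n) : kin d L n X Y = kinR d L n X Y := by
  unfold kin kinR
  push_cast
  refine Finset.sum_congr rfl fun i _ => ?_
  split_ifs <;> simp [lap_eq]

lemma lapR_row_sum (d L : ℕ) [NeZero L] (x : Tor d L) : ∑ y, lapR d L x y = 0 := by
  unfold lapR
  rw [Finset.sum_sub_distrib, Finset.sum_comm]
  simp only [Finset.sum_add_distrib, Finset.sum_ite_eq', Finset.mem_univ, if_true]
  simp
  ring

lemma kinR_row_sum (d L n : ℕ) [NeZero L] (X : Cfg d L n) : ∑ Y, kinR d L n X Y = 0 := by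
  unfold kinR
  rw [Finset.sum_comm]
  refine Finset.sum_eq_zero fun i _ => ?_
  rw [← Finset.sum_filter]
  refine Eq.trans ?_ (lapR_row_sum d L (X i))
  refine Finset.sum_nbij' (fun Y => Y i) (fun z => Function.update X i z) ?_ ?_ ?_ ?_ ?_
  · simp
  · intro z _
    simp +contextual
  · intro Y hY
    have hY' := (Finset.mem_filter.mp hY).2
    funext j
    by_cases h : j = i
    · subst h; simp
    · simp [h, hY' j h]
  · simp
  · simp

lemma kinR_offdiag (d L n : ℕ) [NeZero L] (X Y : Cfg d L n) (h : X ≠ Y) :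
    0 ≤ kinR d L n X Y := by
  unfold kinR
  refine Finset.sum_nonneg fun i _ => ?_
  split_ifs with hi
  · have hne : Y i ≠ X i := by
      intro hXY
      apply h
      funext j
      by_cases hj : j = i
      · subst hj; exact hXY.symm
      · exact hi j hj
    rw [lapR, if_neg hne, sub_zero]
    positivity
  · exact le_rfl

lemma heat_row_sum_le (d L : ℕ) [NeZero L] (v : Tor d L → ℝ) (hv : ∀ x, 0 ≤ v x) (n : ℕ)
    {ν : ℝ} (hν : 0 ≤ ν) (X : Cfg d L n) :
    ∑ Y, ‖matExp (-(ham d L v ν 1 n)) X Y‖ ≤ 1 := by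
  refine matExp_row_sum_le_one _ (fun X Y => ν / 2 * kinR d L n X Y
    - if X = Y then 1 / 2 * ∑ i : Fin n, ∑ j : Fin n, v (X i - X j) else 0) ?_ ?_ ?_ X
  · intro X Y
    simp only [ham, Matrix.neg_apply, Matrix.add_apply, Matrix.smul_apply, kin_eq,
      Matrix.diagonal_apply]
    split_ifs
    · push_cast
      simp
      ring
    · push_cast
      simp
  · intro X Y h
    have := kinR_offdiag d L n X Y h
    simp only [if_neg h, sub_zero]
    positivity
  · intro X
    rw [Finset.sum_sub_distrib, ← Finset.mul_sum, kinR_row_sum]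
    have : 0 ≤ ∑ i : Fin n, ∑ j : Fin n, v (X i - X j) :=
      Finset.sum_nonneg fun i _ => Finset.sum_nonneg fun j _ => hv _
    simp
    exact this

lemma symProj_eq (d L n : ℕ) [NeZero L] (X Y : Cfg d L n) :
    symProj d L n X Y = ((n ! : ℕ) : ℂ)⁻¹ * (permCount X Y : ℂ) := by
  unfold symProj permCount
  push_cast
  congr 1

lemma permCount_le_self {α : Type*} [Fintype α] [DecidableEq α] {n : ℕ} (X Y : Fin n → α) :
    permCount X Y ≤ permCount Y Y := by
  rw [permCount_eq, permCount_self]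
  split_ifs with h
  · rw [h]
  · exact Nat.zero_le _

/-- Uniform bound in `ν`: the rows of `e^{-H}` have `ℓ¹`-norm at most one, and each column `Y` of the
symmetrization projection is largest on the diagonal. -/
lemma heat_symProj_bound (d L : ℕ) [NeZero L] (v : Tor d L → ℝ) (hv : ∀ x, 0 ≤ v x) (n : ℕ)
    {ν : ℝ} (hν : 0 ≤ ν) (X Y : Cfg d L n) :
    ‖(matExp (-(ham d L v ν 1 n)) * symProj d L n) X Y‖
      ≤ ((n ! : ℕ) : ℝ)⁻¹ * (permCount Y Y : ℝ) := by
  rw [Matrix.mul_apply]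
  calc ‖∑ Z, matExp (-(ham d L v ν 1 n)) X Z * symProj d L n Z Y‖
      ≤ ∑ Z, ‖matExp (-(ham d L v ν 1 n)) X Z‖ * (((n ! : ℕ) : ℝ)⁻¹ * (permCount Y Y : ℝ)) := by
        refine norm_sum_le_of_le _ fun Z _ => ?_
        rw [norm_mul, symProj_eq, norm_mul, norm_inv, Complex.norm_natCast, Complex.norm_natCast]
        gcongr
        exact permCount_le_self Z Y
    _ = (∑ Z, ‖matExp (-(ham d L v ν 1 n)) X Z‖) * (((n ! : ℕ) : ℝ)⁻¹ * (permCount Y Y : ℝ)) := by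
        rw [Finset.sum_mul]
    _ ≤ 1 * (((n ! : ℕ) : ℝ)⁻¹ * (permCount Y Y : ℝ)) := by
        gcongr
        exact heat_row_sum_le d L v hv n hν X
    _ = _ := one_mul _

/-- At `ν = 0` the Hamiltonian is diagonal, and its exponential is continuous in `ν`. -/
lemma heat_symProj_tendsto (d L : ℕ) [NeZero L] (v : Tor d L → ℝ) (n : ℕ) (X Y : Cfg d L n) :
    Tendsto (fun ν : ℝ => (matExp (-(ham d L v ν 1 n)) * symProj d L n) X Y) (𝓝[>] 0)
      (𝓝 ((Real.exp (-(1 / 2 * ∑ i : Fin n, ∑ j : Fin n, v (X i - X j))) : ℝ)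
        * (((n ! : ℕ) : ℂ)⁻¹ * (permCount X Y : ℂ)))) := by
  have hham : Continuous fun ν : ℝ => -(ham d L v ν 1 n) := by
    unfold ham
    fun_prop
  have hcont : Continuous fun ν : ℝ => (matExp (-(ham d L v ν 1 n)) * symProj d L n) X Y := by
    have := (continuous_matExp.comp hham).matrix_mul
      (continuous_const (y := symProj d L n))
    exact this.matrix_elem X Y
  have h0 : (matExp (-(ham d L v 0 1 n)) * symProj d L n) X Y
      = (Real.exp (-(1 / 2 * ∑ i : Fin n, ∑ j : Fin n, v (X i - X j))) : ℝ)
        * (((n ! : ℕ) : ℂ)⁻¹ * (permCount X Y : ℂ)) := by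
    rw [← symProj_eq, matExp_eq_exp, ham]
    simp only [zero_div, neg_zero, Complex.ofReal_zero, zero_smul, zero_add]
    rw [Matrix.diagonal_neg, Matrix.exp_diagonal, Matrix.diagonal_mul]
    congr 1
    rw [Pi.coe_exp]
    rw [← Complex.exp_eq_exp_ℂ]
    push_cast
    rfl
  rw [← h0]
  exact (hcont.tendsto 0).mono_left nhdsWithin_le_nhds

/-! ### Energies and weights of occupation numbers -/

/-- The interaction energy `½ ∑_{a,b} N(a) N(b) v(a - b)` of an occupation number. -/
def occPotential {d L : ℕ} [NeZero L] (v : Tor d L → ℝ) (N : Tor d L → ℕ) : ℝ :=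
  1 / 2 * ∑ a, ∑ b, (N a : ℝ) * ((N b : ℝ) * v (a - b))

lemma sum_loopOcc_mul {α : Type*} [Fintype α] [DecidableEq α] {n : ℕ} (k : Fin n → ℕ+)
    (x : Fin n → α) (f : α → ℝ) :
    ∑ a, (((∑ i, loopOcc (k i, x i) : α → ℕ) a : ℕ) : ℝ) * f a = ∑ i, ((k i : ℕ) : ℝ) * f (x i) := by
  simp only [Finset.sum_apply, Nat.cast_sum, Finset.sum_mul]
  rw [Finset.sum_comm]
  refine Finset.sum_congr rfl fun i _ => ?_
  rw [Finset.sum_eq_single (x i)]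
  · simp [loopOcc]
  · intro b _ hb
    simp [loopOcc, hb]
  · simp

lemma occPotential_loopOcc {d L n : ℕ} [NeZero L] (v : Tor d L → ℝ) (k : Fin n → ℕ+)
    (x : Cfg d L n) : occPotential v (∑ i, loopOcc (k i, x i)) = Vlm d L v n k x := by
  unfold occPotential Vlm
  simp only [← Finset.mul_sum]
  rw [sum_loopOcc_mul k x (fun a => ∑ b, _ * _)]
  congr 1
  refine Finset.sum_congr rfl fun i _ => ?_
  rw [sum_loopOcc_mul k x (fun b => v (x i - b)), Finset.mul_sum]
  exact Finset.sum_congr rfl fun j _ => by ring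

lemma occ_eq_sum_loopOcc {α : Type*} [DecidableEq α] {n : ℕ} (x : Fin n → α) :
    occ x = ∑ i, loopOcc ((fun _ => (1 : ℕ+)) i, x i) := by
  simp [occ, loopOcc]

lemma occPotential_occ {d L n : ℕ} [NeZero L] (v : Tor d L → ℝ) (x : Cfg d L n) :
    occPotential v (occ x) = 1 / 2 * ∑ i, ∑ j, v (x i - x j) := by
  rw [occ_eq_sum_loopOcc, occPotential_loopOcc, Vlm]
  simp

lemma occPotential_nonneg {d L : ℕ} [NeZero L] (v : Tor d L → ℝ) (hv : ∀ x, 0 ≤ v x)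
    (N : Tor d L → ℕ) : 0 ≤ occPotential v N := by
  unfold occPotential
  refine mul_nonneg (by norm_num) (Finset.sum_nonneg fun a _ => Finset.sum_nonneg fun b _ => ?_)
  have := hv (a - b)
  positivity

/-- The weight `e^{-κ₀ |N|} e^{-V(N)}` of an occupation number in the zero-kinetic-energy grand
canonical ensemble. -/
def gibbs {d L : ℕ} [NeZero L] (v : Tor d L → ℝ) (κ₀ : ℝ) (N : Tor d L → ℕ) : ℝ :=
  Real.exp (-(κ₀ * totalOcc (Tor d L) N)) * Real.exp (-(occPotential v N))

lemma gibbs_nonneg {d L : ℕ} [NeZero L] (v : Tor d L → ℝ) (κ₀ : ℝ) (N : Tor d L → ℕ) :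
    0 ≤ gibbs v κ₀ N := by unfold gibbs; positivity

lemma gibbs_le {d L : ℕ} [NeZero L] (v : Tor d L → ℝ) (hv : ∀ x, 0 ≤ v x) (κ₀ : ℝ)
    (N : Tor d L → ℕ) : gibbs v κ₀ N ≤ Real.exp (-(κ₀ * totalOcc (Tor d L) N)) := by
  refine mul_le_of_le_one_right (Real.exp_pos _).le (Real.exp_le_one_iff.mpr ?_)
  have := occPotential_nonneg v hv N
  linarith

/-! ### The limit of the numerators -/

/-- The `n`-th term of the numerator of `Γ_p^{ν,κ₀/ν,1}`. For `p = 0` it is the `n`-th term of the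
grand canonical partition function. -/
def numTerm (d L : ℕ) [NeZero L] (v : Tor d L → ℝ) (κ₀ : ℝ) (p : ℕ) (x y : Cfg d L p)
    (ν : ℝ) (n : ℕ) : ℂ :=
  ((Nat.factorial (p + n) : ℂ) / (Nat.factorial n : ℂ))
    * ((Real.exp (-(κ₀ * (p + n))) : ℝ) : ℂ)
    * ∑ u : Cfg d L n, (matExp (-(ham d L v ν 1 (p + n))) * symProj d L (p + n))
          (Fin.append x u) (Fin.append y u)

/-- The limit of `numTerm` as `ν → 0⁺`. -/
def limTerm (d L : ℕ) [NeZero L] (v : Tor d L → ℝ) (κ₀ : ℝ) (p : ℕ) (x y : Cfg d L p)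
    (n : ℕ) : ℝ :=
  ((n ! : ℕ) : ℝ)⁻¹ * ∑ u : Cfg d L n,
    (permCount (Fin.append x u) (Fin.append y u) : ℝ) * gibbs v κ₀ (occ (Fin.append x u))

/-- A `ν`-independent bound on `numTerm` and `limTerm`. -/
def boundTerm (d L : ℕ) [NeZero L] (κ₀ : ℝ) (p : ℕ) (y : Cfg d L p) (n : ℕ) : ℝ :=
  ((n ! : ℕ) : ℝ)⁻¹ * ∑ u : Cfg d L n,
    (permCount (Fin.append y u) (Fin.append y u) : ℝ) * Real.exp (-(κ₀ * (p + n)))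

lemma numTerm_tendsto (d L : ℕ) [NeZero L] (v : Tor d L → ℝ) (κ₀ : ℝ) (p : ℕ)
    (x y : Cfg d L p) (n : ℕ) :
    Tendsto (fun ν => numTerm d L v κ₀ p x y ν n) (𝓝[>] 0) (𝓝 (limTerm d L v κ₀ p x y n : ℂ)) := by
  have h := (tendsto_finsetSum (Finset.univ : Finset (Cfg d L n)) fun u _ =>
    heat_symProj_tendsto d L v (p + n) (Fin.append x u) (Fin.append y u)).const_mul
      (((Nat.factorial (p + n) : ℂ) / (Nat.factorial n : ℂ))
        * ((Real.exp (-(κ₀ * (p + n))) : ℝ) : ℂ))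
  refine h.trans_eq ?_
  rw [limTerm]
  push_cast
  rw [Finset.mul_sum, Finset.mul_sum]
  congr 1
  refine Finset.sum_congr rfl fun u _ => ?_
  rw [gibbs, occPotential_occ, totalOcc_occ]
  have h1 : ((p + n)! : ℂ) ≠ 0 := by exact_mod_cast (Nat.factorial_ne_zero _)
  push_cast
  field_simp

lemma numTerm_bound (d L : ℕ) [NeZero L] (v : Tor d L → ℝ) (hv : ∀ x, 0 ≤ v x) (κ₀ : ℝ) (p : ℕ)
    (x y : Cfg d L p) (n : ℕ) {ν : ℝ} (hν : 0 ≤ ν) :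
    ‖numTerm d L v κ₀ p x y ν n‖ ≤ boundTerm d L κ₀ p y n := by
  have h1 : ((p + n)! : ℝ) ≠ 0 := by exact_mod_cast (Nat.factorial_ne_zero _)
  have hb : boundTerm d L κ₀ p y n = (((p + n)! : ℝ) / (n ! : ℝ)) * Real.exp (-(κ₀ * (p + n)))
      * ∑ u : Cfg d L n, (((p + n)! : ℕ) : ℝ)⁻¹ *
        (permCount (Fin.append y u) (Fin.append y u) : ℝ) := by
    rw [boundTerm, Finset.mul_sum, Finset.mul_sum]
    refine Finset.sum_congr rfl fun u _ => ?_
    field_simp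
  rw [hb, numTerm, norm_mul, norm_mul, norm_div, Complex.norm_natCast, Complex.norm_natCast,
    Complex.norm_real, Real.norm_of_nonneg (Real.exp_pos _).le]
  gcongr
  exact norm_sum_le_of_le _ fun u _ => heat_symProj_bound d L v hv (p + n) hν _ _

lemma limTerm_nonneg (d L : ℕ) [NeZero L] (v : Tor d L → ℝ) (κ₀ : ℝ) (p : ℕ) (x y : Cfg d L p)
    (n : ℕ) : 0 ≤ limTerm d L v κ₀ p x y n :=
  mul_nonneg (by positivity) (Finset.sum_nonneg fun _ _ =>
    mul_nonneg (by positivity) (gibbs_nonneg _ _ _))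

lemma limTerm_le (d L : ℕ) [NeZero L] (v : Tor d L → ℝ) (hv : ∀ x, 0 ≤ v x) (κ₀ : ℝ) (p : ℕ)
    (x y : Cfg d L p) (n : ℕ) : limTerm d L v κ₀ p x y n ≤ boundTerm d L κ₀ p y n := by
  unfold limTerm boundTerm
  gcongr with u
  · exact gibbs_nonneg _ _ _
  · exact permCount_le_self _ _
  · refine (gibbs_le v hv κ₀ _).trans_eq ?_
    rw [totalOcc_occ]
    push_cast
    rfl

/-- Each of the at most `(n + 1)^{|α|}` occupation numbers of `n` particles contributes at most `n!`. -/
lemma sum_permCount_self_le {α : Type*} [Fintype α] [DecidableEq α] (n : ℕ) :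
    ∑ X : Fin n → α, permCount X X ≤ n ! * (n + 1) ^ Fintype.card α := by
  have h : ∀ X : Fin n → α, permCount X X = ∑ m ∈ Fintype.piFinset fun _ : α => Finset.range (n + 1),
      if occ X = m then ∏ a, (m a)! else 0 := by
    intro X
    rw [Finset.sum_ite_eq, if_pos, permCount_self]
    rw [Fintype.mem_piFinset]
    intro a
    rw [Finset.mem_range, occ_apply, Nat.lt_succ_iff]
    exact (Fintype.card_subtype_le _).trans_eq (Fintype.card_fin n)
  simp only [h]
  rw [Finset.sum_comm]
  calc _ ≤ ∑ m ∈ Fintype.piFinset fun _ : α => Finset.range (n + 1), n ! := by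
        refine Finset.sum_le_sum fun m _ => ?_
        rw [sum_occ_factorial]
        split_ifs <;> simp
    _ = _ := by
        rw [Finset.sum_const, Fintype.card_piFinset]
        simp [mul_comm]

lemma factorial_add_le (p n : ℕ) : (p + n)! ≤ n ! * (p + n) ^ p := by
  have h := Nat.factorial_mul_descFactorial (show p ≤ p + n by omega)
  rw [Nat.add_sub_cancel_left] at h
  rw [← h]
  exact Nat.mul_le_mul_left _ (Nat.descFactorial_le_pow _ _)

lemma boundTerm_nonneg (d L : ℕ) [NeZero L] (κ₀ : ℝ) (p : ℕ) (y : Cfg d L p) (n : ℕ) :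
    0 ≤ boundTerm d L κ₀ p y n := by
  unfold boundTerm; positivity

/-- The bounds grow polynomially in `n` against the factor `e^{-κ₀ n}`. -/
lemma boundTerm_summable (d L : ℕ) [NeZero L] {κ₀ : ℝ} (hκ₀ : 0 < κ₀) (p : ℕ) (y : Cfg d L p) :
    Summable (boundTerm d L κ₀ p y) := by
  set K := p + Fintype.card (Tor d L) with hK
  have hs : Summable fun n : ℕ => Real.exp κ₀ * (((n + (p + 1) : ℕ) : ℝ) ^ K
      * Real.exp (-κ₀ * ((n + (p + 1) : ℕ) : ℝ))) :=
    ((summable_nat_add_iff (p + 1)).mpr (Real.summable_pow_mul_exp_neg_nat_mul K hκ₀)).mul_left _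
  refine Summable.of_nonneg_of_le (boundTerm_nonneg d L κ₀ p y) (fun n => ?_) hs
  have h1 : ∑ u : Cfg d L n, permCount (Fin.append y u) (Fin.append y u)
      ≤ n ! * ((p + n) ^ p * (p + n + 1) ^ Fintype.card (Tor d L)) := by
    calc ∑ u : Cfg d L n, permCount (Fin.append y u) (Fin.append y u)
        ≤ ∑ X : Cfg d L (p + n), permCount X X := by
          have hinj : Function.Injective (fun u : Cfg d L n => (Fin.append y u : Cfg d L (p + n))) := by
            intro u u' h
            funext i
            simpa using congrFun h (Fin.natAdd p i)
          rw [← Finset.sum_image (f := fun X : Cfg d L (p + n) => permCount X X)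
            (g := fun u : Cfg d L n => (Fin.append y u : Cfg d L (p + n))) (hinj.injOn)]
          exact Finset.sum_le_sum_of_subset (Finset.subset_univ _)
      _ ≤ (p + n)! * (p + n + 1) ^ Fintype.card (Tor d L) := sum_permCount_self_le (p + n)
      _ ≤ (n ! * (p + n) ^ p) * (p + n + 1) ^ Fintype.card (Tor d L) :=
          Nat.mul_le_mul_right _ (factorial_add_le p n)
      _ = _ := by ring
  have h2 : ((∑ u : Cfg d L n, permCount (Fin.append y u) (Fin.append y u) : ℕ) : ℝ)
      ≤ (n ! : ℝ) * (((p : ℝ) + n + 1) ^ K) := by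
    refine (Nat.cast_le.mpr h1).trans ?_
    push_cast
    rw [hK, pow_add]
    have hpw : ((p : ℝ) + n) ^ p ≤ ((p : ℝ) + n + 1) ^ p :=
      pow_le_pow_left₀ (by positivity) (by linarith) _
    exact mul_le_mul_of_nonneg_left (mul_le_mul_of_nonneg_right hpw (by positivity)) (by positivity)
  have h3 : (n ! : ℝ) ≠ 0 := by exact_mod_cast (Nat.factorial_ne_zero _)
  rw [boundTerm, ← Finset.sum_mul, ← Nat.cast_sum]
  calc ((n ! : ℕ) : ℝ)⁻¹ * (((∑ u : Cfg d L n,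
        permCount (Fin.append y u) (Fin.append y u) : ℕ) : ℝ) * Real.exp (-(κ₀ * (p + n))))
      ≤ ((n ! : ℕ) : ℝ)⁻¹ * (((n ! : ℝ) * (((p : ℝ) + n + 1) ^ K)) * Real.exp (-(κ₀ * (p + n)))) := by
        gcongr
    _ = (((p : ℝ) + n + 1) ^ K) * Real.exp (-(κ₀ * (p + n))) := by
        field_simp
    _ = _ := by
        have : Real.exp (-(κ₀ * (p + n))) = Real.exp κ₀ * Real.exp (-κ₀ * ((n + (p + 1) : ℕ) : ℝ)) := by
          rw [← Real.exp_add]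
          congr 1
          push_cast
          ring
        rw [this]
        push_cast
        ring

/-- Dominated convergence of the numerators of the reduced density matrices. -/
lemma num_tendsto (d L : ℕ) [NeZero L] (v : Tor d L → ℝ) (hv : ∀ x, 0 ≤ v x) {κ₀ : ℝ}
    (hκ₀ : 0 < κ₀) (p : ℕ) (x y : Cfg d L p) :
    Tendsto (fun ν => ∑' n, numTerm d L v κ₀ p x y ν n) (𝓝[>] 0)
      (𝓝 ((∑' n, limTerm d L v κ₀ p x y n : ℝ) : ℂ)) := by
  rw [Complex.ofReal_tsum]
  refine tendsto_tsum_of_dominated_convergence (boundTerm_summable d L hκ₀ p y)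
    (fun n => numTerm_tendsto d L v κ₀ p x y n) ?_
  filter_upwards [self_mem_nhdsWithin] with ν hν n
  exact numTerm_bound d L v hv κ₀ p x y n (le_of_lt hν)

lemma limTerm_summable (d L : ℕ) [NeZero L] (v : Tor d L → ℝ) (hv : ∀ x, 0 ≤ v x) {κ₀ : ℝ}
    (hκ₀ : 0 < κ₀) (p : ℕ) (x y : Cfg d L p) : Summable (limTerm d L v κ₀ p x y) :=
  Summable.of_nonneg_of_le (limTerm_nonneg d L v κ₀ p x y) (limTerm_le d L v hv κ₀ p x y)
    (boundTerm_summable d L hκ₀ p y)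

/-! ### Identification with the large-mass correlation functions -/

/-- The sum over occupation numbers `N` of the weight of `N` with additional loops of lengths `k_i`
at the sites `x_i`; it equals `e^{-κ₀ |k|} Z^{lm}(k,x)`. -/
def sourceSum {d L : ℕ} [NeZero L] (v : Tor d L → ℝ) (κ₀ : ℝ) {p : ℕ} (x : Cfg d L p)
    (k : Fin p → ℕ+) : ℝ≥0∞ :=
  ∑' N, ENNReal.ofReal (gibbs v κ₀ (∑ i, loopOcc (k i, x i) + N))

/-- The limiting numerator, rewritten by `permutation_expansion`. -/
lemma limTerm_expansion (d L : ℕ) [NeZero L] (v : Tor d L → ℝ) (κ₀ : ℝ) (p : ℕ)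
    (x y : Cfg d L p) : ∑' n, ENNReal.ofReal (limTerm d L v κ₀ p x y n)
      = permCount x y * ∑' k, sourceSum v κ₀ x k := by
  unfold sourceSum
  rw [← permutation_expansion p x y (fun N => ENNReal.ofReal (gibbs v κ₀ N))]
  refine tsum_congr fun n => ?_
  rw [limTerm, ENNReal.ofReal_mul (by positivity), ENNReal.ofReal_inv_of_pos
    (by exact_mod_cast Nat.factorial_pos n), ENNReal.ofReal_natCast,
    ENNReal.ofReal_sum_of_nonneg (fun _ _ => mul_nonneg (by positivity) (gibbs_nonneg _ _ _))]
  congr 1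
  refine Finset.sum_congr rfl fun u _ => ?_
  rw [ENNReal.ofReal_mul (by positivity), ENNReal.ofReal_natCast]

lemma tsum_sourceSum_ne_top (d L : ℕ) [NeZero L] (v : Tor d L → ℝ) (hv : ∀ x, 0 ≤ v x) {κ₀ : ℝ}
    (hκ₀ : 0 < κ₀) (p : ℕ) (x : Cfg d L p) : ∑' k, sourceSum v κ₀ x k ≠ ∞ := by
  have h := limTerm_expansion d L v κ₀ p x x
  have hfin := (limTerm_summable d L v hv hκ₀ p x x).tsum_ofReal_ne_top
  rw [h] at hfin
  have hpos : (permCount x x : ℝ≥0∞) ≠ 0 := by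
    rw [permCount_self]
    exact_mod_cast (Finset.prod_pos fun a _ => Nat.factorial_pos _).ne'
  intro htop
  rw [htop, ENNReal.mul_top hpos] at hfin
  exact hfin rfl

lemma limTerm_tsum (d L : ℕ) [NeZero L] (v : Tor d L → ℝ) (hv : ∀ x, 0 ≤ v x) {κ₀ : ℝ}
    (hκ₀ : 0 < κ₀) (p : ℕ) (x y : Cfg d L p) :
    ∑' n, limTerm d L v κ₀ p x y n = permCount x y * ∑' k, (sourceSum v κ₀ x k).toReal := by
  have h := limTerm_expansion d L v κ₀ p x y
  have h' := congrArg ENNReal.toReal h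
  rw [ENNReal.tsum_toReal_eq (fun _ => ENNReal.ofReal_ne_top), ENNReal.toReal_mul,
    ENNReal.toReal_natCast, ENNReal.tsum_toReal_eq
      (ENNReal.ne_top_of_tsum_ne_top (tsum_sourceSum_ne_top d L v hv hκ₀ p x))] at h'
  rw [← h']
  exact tsum_congr fun n => (ENNReal.toReal_ofReal (limTerm_nonneg d L v κ₀ p x y n)).symm

/-- The loop gas sum of a real function in the iterated form used to define `Z^{lm}`. Finiteness in
`ℝ≥0∞` makes every inner series summable. -/
lemma gasSum_toReal {α : Type*} [Fintype α] [DecidableEq α] (F : (α → ℕ) → ℝ) (hF : ∀ N, 0 ≤ F N)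
    (hfin : gasSum (loopWeight α) loopOcc (fun N => ENNReal.ofReal (F N)) ≠ ∞) :
    (gasSum (loopWeight α) loopOcc (fun N => ENNReal.ofReal (F N))).toReal
      = ∑' n : ℕ, ((n ! : ℕ) : ℝ)⁻¹ * ∑' kt : Fin n → ℕ+, (∏ i, ((kt i : ℕ) : ℝ)⁻¹) *
          ∑ xt : Fin n → α, F (∑ i, loopOcc (kt i, xt i)) := by
  have hterms := ENNReal.ne_top_of_tsum_ne_top hfin
  rw [gasSum, ENNReal.tsum_toReal_eq hterms]
  refine tsum_congr fun n => ?_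
  have hn : gasTerm (loopWeight α) loopOcc n (fun N => ENNReal.ofReal (F N))
      = ∑' kt : Fin n → ℕ+, ENNReal.ofReal ((∏ i, ((kt i : ℕ) : ℝ)⁻¹) *
          ∑ xt : Fin n → α, F (∑ i, loopOcc (kt i, xt i))) := by
    rw [gasTerm, ← (Equiv.arrowProdEquivProdArrow (Fin n) (fun _ => ℕ+) (fun _ => α)).symm.tsum_eq,
      ENNReal.tsum_prod']
    refine tsum_congr fun kt => ?_
    rw [tsum_fintype, ENNReal.ofReal_mul (by positivity), ENNReal.ofReal_sum_of_nonneg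
      (fun _ _ => hF _), Finset.mul_sum]
    refine Finset.sum_congr rfl fun xt _ => ?_
    congr 1
    rw [ENNReal.ofReal_prod_of_nonneg (fun _ _ => by positivity)]
    refine Finset.prod_congr rfl fun i _ => ?_
    rw [ENNReal.ofReal_inv_of_pos (by exact_mod_cast (kt i).pos), ENNReal.ofReal_natCast]
    rfl
  rw [ENNReal.toReal_mul, ENNReal.toReal_inv, ENNReal.toReal_natCast, hn,
    ENNReal.tsum_toReal_eq (fun _ => ENNReal.ofReal_ne_top)]
  congr 1
  refine tsum_congr fun kt => ENNReal.toReal_ofReal ?_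
  exact mul_nonneg (by positivity) (Finset.sum_nonneg fun _ _ => hF _)

/-- By `gasSum_loop`, the loop gas defining `Z^{lm}(k,x)` is a sum over occupation numbers. -/
lemma exp_mul_ZlmK (d L : ℕ) [NeZero L] (v : Tor d L → ℝ) {κ₀ : ℝ} (p : ℕ) (x : Cfg d L p)
    (k : Fin p → ℕ+) (hfin : sourceSum v κ₀ x k ≠ ∞) :
    ((Real.exp (-(κ₀ * ∑ i : Fin p, ((k i : ℕ) : ℝ))) : ℝ) : ℂ) * ZlmK d L v κ₀ p k x
      = ((sourceSum v κ₀ x k).toReal : ℂ) := by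
  have h1 := gasSum_toReal (fun N => gibbs v κ₀ (∑ i, loopOcc (k i, x i) + N))
    (fun _ => gibbs_nonneg _ _ _) (by rw [gasSum_loop]; exact hfin)
  rw [gasSum_loop] at h1
  rw [sourceSum, h1]
  have h2 : ∀ (n : ℕ) (kt : Fin n → ℕ+) (xt : Cfg d L n),
      gibbs v κ₀ (∑ i, loopOcc (k i, x i) + ∑ i, loopOcc (kt i, xt i))
      = Real.exp (-(κ₀ * ∑ i : Fin p, ((k i : ℕ) : ℝ))) *
        (Real.exp (-(κ₀ * ∑ i : Fin n, ((kt i : ℕ) : ℝ)))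
          * Real.exp (-(Vlm d L v (p + n) (Fin.append k kt) (Fin.append x xt)))) := by
    intro n kt xt
    have h3 : (∑ i, loopOcc (k i, x i) + ∑ i, loopOcc (kt i, xt i) : Tor d L → ℕ)
        = ∑ i, loopOcc ((Fin.append k kt) i, (Fin.append x xt) i) := by
      rw [Fin.sum_univ_add]
      simp
    rw [← occPotential_loopOcc, ← h3, gibbs, map_add, map_sum, map_sum,
      ← Real.exp_add, ← Real.exp_add]
    simp only [totalOcc_loopOcc]
    push_cast
    rw [← Real.exp_add]
    congr 1
    ring
  have h4 : ∀ (n : ℕ) (kt : Fin n → ℕ+),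
      ∑ xt : Cfg d L n, gibbs v κ₀ (∑ i, loopOcc (k i, x i) + ∑ i, loopOcc (kt i, xt i))
      = Real.exp (-(κ₀ * ∑ i : Fin p, ((k i : ℕ) : ℝ))) *
        ∑ xt : Cfg d L n, (Real.exp (-(κ₀ * ∑ i : Fin n, ((kt i : ℕ) : ℝ)))
          * Real.exp (-(Vlm d L v (p + n) (Fin.append k kt) (Fin.append x xt)))) := by
    intro n kt
    simp only [h2]
    rw [← Finset.mul_sum]
  simp only [h4]
  rw [ZlmK]
  simp only [mul_left_comm _ (Real.exp (-(κ₀ * ∑ i : Fin p, ((k i : ℕ) : ℝ)))) _, tsum_mul_left]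
  push_cast
  rfl

/-- Appending to the empty tuple changes nothing, up to the identification of `0 + n` with `n`. -/
lemma zero_append_apply {α : Type*} (f : ∀ N : ℕ, (Fin N → α) → ℂ) {n : ℕ} (e : Fin 0 → α)
    (u : Fin n → α) : f (0 + n) (Fin.append e u) = f n u := by
  have h : ∀ (N : ℕ) (hN : N = n), f N (u ∘ Fin.cast hN) = f n u := by
    rintro N rfl
    rfl
  rw [← h (0 + n) (Nat.zero_add n)]
  congr 1
  rw [show e = Fin.elim0 from Subsingleton.elim _ _, Fin.elim0_append]

/-- The grand canonical partition function is the numerator for `p = 0`. -/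
lemma grandXi_eq (d L : ℕ) [NeZero L] (v : Tor d L → ℝ) (κ₀ : ℝ) {ν : ℝ} (hν : 0 < ν) :
    grandXi d L v ν (κ₀ / ν) 1
      = ∑' n, numTerm d L v κ₀ 0 (fun i => i.elim0) (fun i => i.elim0) ν n := by
  unfold grandXi
  refine tsum_congr fun n => ?_
  have h1 : -(ham d L v ν 1 n + ((κ₀ / ν * ν * n : ℝ) : ℂ) • (1 : Matrix (Cfg d L n) (Cfg d L n) ℂ))
      = -(ham d L v ν 1 n) + ((-(κ₀ * n) : ℝ) : ℂ) • (1 : Matrix (Cfg d L n) (Cfg d L n) ℂ) := by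
    rw [div_mul_cancel₀ _ hν.ne', neg_add]
    push_cast
    rw [neg_smul]
  rw [h1, matExp_add_smul_one, Matrix.smul_mul, Matrix.trace_smul, numTerm, Matrix.trace]
  have h2 : ∀ u : Cfg d L n, (matExp (-(ham d L v ν 1 (0 + n))) * symProj d L (0 + n))
      (Fin.append (fun i => i.elim0) u) (Fin.append (fun i => i.elim0) u)
      = (matExp (-(ham d L v ν 1 n)) * symProj d L n) u u := fun u =>
    zero_append_apply (fun N X => (matExp (-(ham d L v ν 1 N)) * symProj d L N) X X) _ u
  simp only [h2, Matrix.diag_apply]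
  have h3 : (n ! : ℂ) ≠ 0 := by exact_mod_cast (Nat.factorial_ne_zero _)
  rw [Nat.zero_add, div_self h3, one_mul, Complex.ofReal_exp, smul_eq_mul]
  simp

lemma permCount_comm {α : Type*} [Fintype α] [DecidableEq α] {n : ℕ} (X Y : Fin n → α) :
    permCount X Y = permCount Y X := by
  rw [permCount_eq, permCount_eq]
  by_cases h : occ X = occ Y
  · simp [h]
  · simp [h, Ne.symm h]

lemma GammaLm_eq (d L : ℕ) [NeZero L] (v : Tor d L → ℝ) (hv : ∀ x, 0 ≤ v x) {κ₀ : ℝ}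
    (hκ₀ : 0 < κ₀) (p : ℕ) (x y : Cfg d L p) :
    GammaLm d L v κ₀ p x y = (ZlmEmpty d L v κ₀)⁻¹ * ((∑' n, limTerm d L v κ₀ p x y n : ℝ) : ℂ) := by
  have hfin := ENNReal.ne_top_of_tsum_ne_top (tsum_sourceSum_ne_top d L v hv hκ₀ p x)
  rw [limTerm_tsum d L v hv hκ₀, GammaLm]
  push_cast
  rw [← tsum_mul_left, ← tsum_mul_left]
  refine tsum_congr fun k => ?_
  rw [← exp_mul_ZlmK d L v p x k (hfin k), permCount_comm, permCount]
  push_cast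
  rw [Finset.sum_mul, Finset.mul_sum (Finset.univ : Finset (Equiv.Perm (Fin p)))]
  refine Finset.sum_congr rfl fun g _ => ?_
  have : (∏ i : Fin p, (if y (g i) = x i then (1 : ℂ) else 0)) = if x = y ∘ g then 1 else 0 := by
    rw [Finset.prod_ite_zero]
    simp [funext_iff, eq_comm]
  rw [this]
  split_ifs <;> simp
  ring

lemma ZlmEmpty_eq (d L : ℕ) [NeZero L] (v : Tor d L → ℝ) (hv : ∀ x, 0 ≤ v x) {κ₀ : ℝ}
    (hκ₀ : 0 < κ₀) : ZlmEmpty d L v κ₀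
      = ((∑' n, limTerm d L v κ₀ 0 (fun i => i.elim0) (fun i => i.elim0) n : ℝ) : ℂ) := by
  have hfin := ENNReal.ne_top_of_tsum_ne_top
    (tsum_sourceSum_ne_top d L v hv hκ₀ 0 (fun i => i.elim0))
  have h := exp_mul_ZlmK d L v 0 (fun i => i.elim0) (fun i => i.elim0) (hfin _)
  rw [limTerm_tsum d L v hv hκ₀, tsum_eq_single (fun i => i.elim0 : Fin 0 → ℕ+)
    (by intro b hb; exact absurd (Subsingleton.elim _ _) hb)]
  push_cast
  rw [← h, ZlmEmpty, permCount_self]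
  simp [occ]

lemma ZlmEmpty_ne_zero (d L : ℕ) [NeZero L] (v : Tor d L → ℝ) (hv : ∀ x, 0 ≤ v x) {κ₀ : ℝ}
    (hκ₀ : 0 < κ₀) : ZlmEmpty d L v κ₀ ≠ 0 := by
  rw [ZlmEmpty_eq d L v hv hκ₀]
  have h0 : 0 < limTerm d L v κ₀ 0 (fun i => i.elim0) (fun i => i.elim0) 0 := by
    unfold limTerm
    have : ∀ X : Cfg d L (0 + 0), 0 < (permCount X X : ℝ) := by
      intro X
      rw [permCount_self]
      exact_mod_cast (Finset.prod_pos fun a _ => Nat.factorial_pos _)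
    refine mul_pos (by simp) (Finset.sum_pos (fun u _ => mul_pos (this _) ?_) Finset.univ_nonempty)
    unfold gibbs
    positivity
  have hpos := (limTerm_summable d L v hv hκ₀ 0 (fun i => i.elim0) (fun i => i.elim0)).tsum_pos
    (limTerm_nonneg d L v κ₀ 0 _ _) 0 h0
  exact_mod_cast (ne_of_gt hpos)

/-- **Large-mass limit of the reduced density matrices** (Theorem 1.4 (ii), case `R = 0`):
for `v` pointwise nonnegative, `κ₀ > 0`, `p ∈ ℕ*` and `x, y ∈ Λ^p`,
`lim_{ν→0⁺} (Γ_p^{ν,κ₀/ν,1})_{x,y} = (Γ_p^{lm})_{x,y}`. -/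
theorem large_mass_limit_correlation_functions
    (d L : ℕ) (hd : 1 ≤ d) [NeZero L] (κ₀ : ℝ) (hκ₀ : 0 < κ₀)
    (v : Tor d L → ℝ) (hv_nonneg : ∀ x, 0 ≤ v x)
    (p : ℕ) (hp : 1 ≤ p) (x y : Fin p → Tor d L) :
    Tendsto (fun ν : ℝ => GammaQ d L v ν (κ₀ / ν) 1 p x y) (𝓝[>] (0 : ℝ))
      (𝓝 (GammaLm d L v κ₀ p x y)) := by
  have hden := num_tendsto d L v hv_nonneg hκ₀ 0 (fun i => i.elim0) (fun i => i.elim0)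
  rw [← ZlmEmpty_eq d L v hv_nonneg hκ₀] at hden
  have hnum := num_tendsto d L v hv_nonneg hκ₀ p x y
  rw [GammaLm_eq d L v hv_nonneg hκ₀]
  refine ((hden.inv₀ (ZlmEmpty_ne_zero d L v hv_nonneg hκ₀)).mul hnum).congr' ?_
  filter_upwards [self_mem_nhdsWithin] with ν hν
  have hν' : (0 : ℝ) < ν := hν
  rw [GammaQ, grandXi_eq d L v κ₀ hν']
  simp only [numTerm, div_mul_cancel₀ κ₀ hν'.ne']
end
end

section
/- Let v : Λ → ℝ be even and of positive type (its discrete Fourier transform on Λ is pointwise nonnegative), let κ > 0 and λ ≥ 0. For p ∈ ℕ* and x, y ∈ Λ^p define the unnormalized classical p-point correlation function (Γ̂_p^{cl,λ})_{x,y} = ∫ μ_{(−Δ/2+κ)^{−1}}(dφ) ∏_{i=1}^p conj(φ(y_i)) ∏_{i=1}^p φ(x_i) e^{−(λ/2)∑_{x',y'∈Λ} |φ(x')|² v(x'−y') |φ(y')|²}. Then (Γ̂_p^{cl,λ})_{x,y} is real and satisfies the correlation inequality 0 ≤ (Γ̂_p^{cl,λ})_{x,y} ≤ (Γ̂_p^{cl,0})_{x,y}.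 -/
/-!
Split `-Δ/2 + κ = (d + κ) - J / 2`, with `J ≥ 0` the adjacency matrix (`exponent_eq`). The Taylor
polynomials of the hopping factor `exp (½ ⟨φ, J φ⟩)`, multiplied by
`∏ conj (φ (y i)) ∏ φ (x i)`, are polynomials in `φ` and `conj φ` with nonnegative coefficients
(`posPoly`). The rest of the integrand, `exp (-(d + κ) ∑ |φ|²)` times the interaction weight,
depends only on the moduli `|φ z|`.

Against such a radial weight, a monomial `∏ conj (φ z) ^ α z * φ z ^ β z` integrates to zero when
`α ≠ β`, by rotating a single phase (`integral_eq_zero_of_charge`). When `α = β` it is pointwise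
nonnegative, so its integral is nonnegative and monotone in the weight (`integral_posPoly_le`).
Since `v` is of positive type, the quadratic form in `|φ|²` is nonnegative (`quad_nonneg`), so the
radial weight at `λ ≥ 0` is at most the one at `λ = 0`, and the inequalities hold for each Taylor
polynomial. They pass to the limit by dominated convergence: `|½ ⟨φ, J φ⟩| ≤ d ∑ |φ|²`
(`norm_hop_le`) leaves the integrable majorant `|monomial| * exp (-κ ∑ |φ|²)`.
-/

open scoped BigOperators ComplexConjugate Classical Real Topology
open MeasureTheory Filter Matrix

noncomputable section

/-- The density of the complex Gaussian measure `μ_{(-Δ/2+κ)^{-1}}` with respect to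
Lebesgue measure on `ℂ^Λ`. -/
def gaussWeight (d L : ℕ) [NeZero L] (κ : ℝ) (φ : Tor d L → ℂ) : ℂ :=
  (((Real.pi : ℂ) ^ Fintype.card (Tor d L))
      * ((-(1 / 2 : ℂ)) • lap d L + (κ : ℂ) • 1)⁻¹.det)⁻¹
    * Complex.exp (∑ x : Tor d L,
        (starRingEnd ℂ) (φ x) * (((1 / 2 : ℂ) • lap d L - (κ : ℂ) • 1).mulVec φ x))

/-- The interaction weight `e^{-(λ/2) ∑_{x',y'} |φ(x')|² v(x'-y') |φ(y')|²}`. -/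
def intWeightL (d L : ℕ) [NeZero L] (v : Tor d L → ℝ) (lam : ℝ) (φ : Tor d L → ℂ) : ℂ :=
  Complex.exp (-((lam : ℂ) / 2) * ∑ x : Tor d L, ∑ y : Tor d L,
    (Complex.normSq (φ x) : ℂ) * ((v (x - y) : ℝ) : ℂ) * (Complex.normSq (φ y) : ℂ))

/-- The discrete Fourier transform of `v` on the torus. -/
def dft (d L : ℕ) [NeZero L] (v : Tor d L → ℝ) (ξ : Tor d L) : ℂ :=
  ∑ x : Tor d L, ((v x : ℝ) : ℂ) *
    Complex.exp (2 * (Real.pi : ℂ) * Complex.I *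
      (∑ j : Fin d, (((ξ j).val : ℕ) : ℂ) * (((x j).val : ℕ) : ℂ)) / (L : ℂ))

/-- `v` is of positive type: its discrete Fourier transform is pointwise a nonnegative real. -/
def IsPosType (d L : ℕ) [NeZero L] (v : Tor d L → ℝ) : Prop :=
  ∀ ξ : Tor d L, (dft d L v ξ).im = 0 ∧ 0 ≤ (dft d L v ξ).re

/-- The unnormalized classical `p`-point correlation function `(Γ̂_p^{cl,λ})_{x,y}`. -/
def GammaHat (d L : ℕ) [NeZero L] (v : Tor d L → ℝ) (κ lam : ℝ) (p : ℕ)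
    (x y : Fin p → Tor d L) : ℂ :=
  ∫ φ : Tor d L → ℂ,
    gaussWeight d L κ φ
      * (∏ i : Fin p, (starRingEnd ℂ) (φ (y i)))
      * (∏ i : Fin p, φ (x i))
      * intWeightL d L v lam φ

/-! ### Monomials with nonnegative coefficients -/

section Monomials

variable {ι : Type*} [Fintype ι]

/-- The multiplicative monoid of functions `φ ↦ c ∏ z, conj (φ z) ^ α z * φ z ^ β z` on `ℂ^ι`
with a nonnegative coefficient `c`. -/
def monomials (ι : Type*) [Fintype ι] : Submonoid ((ι → ℂ) → ℂ) where
  carrier := {f | ∃ c : ℝ, 0 ≤ c ∧ ∃ α β : ι → ℕ,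
    ∀ φ, f φ = (c : ℂ) * ∏ z, (conj (φ z) ^ α z * φ z ^ β z)}
  one_mem' := ⟨1, zero_le_one, 0, 0, fun φ => by simp⟩
  mul_mem' := by
    rintro f g ⟨c, hc, α, β, hf⟩ ⟨c', hc', α', β', hg⟩
    refine ⟨c * c', mul_nonneg hc hc', α + α', β + β', fun φ => ?_⟩
    simp only [Pi.mul_apply, hf, hg, Complex.ofReal_mul, Pi.add_apply]
    rw [mul_mul_mul_comm, ← Finset.prod_mul_distrib]
    congr 1
    exact Finset.prod_congr rfl fun z _ => by ring

/-- Polynomials in `φ` and `conj φ` with nonnegative coefficients. -/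
def posPoly (ι : Type*) [Fintype ι] : Subsemiring ((ι → ℂ) → ℂ) :=
  (monomials ι).subsemiringClosure

lemma mem_posPoly_of_mem_monomials {f : (ι → ℂ) → ℂ} (hf : f ∈ monomials ι) : f ∈ posPoly ι :=
  (Submonoid.subsemiringClosure_mem _).2 (AddSubmonoid.subset_closure hf)

lemma const_mem_monomials {c : ℝ} (hc : 0 ≤ c) : (fun _ : ι → ℂ => (c : ℂ)) ∈ monomials ι :=
  ⟨c, hc, 0, 0, fun φ => by simp⟩

lemma coord_mem_monomials (z : ι) : (fun φ : ι → ℂ => φ z) ∈ monomials ι := by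
  refine ⟨1, zero_le_one, 0, Pi.single z 1, fun φ => ?_⟩
  rw [Finset.prod_eq_single z]
  · simp
  · intro b _ hb
    simp [hb]
  · simp

lemma conj_coord_mem_monomials (z : ι) : (fun φ : ι → ℂ => conj (φ z)) ∈ monomials ι := by
  refine ⟨1, zero_le_one, Pi.single z 1, 0, fun φ => ?_⟩
  rw [Finset.prod_eq_single z]
  · simp
  · intro b _ hb
    simp [hb]
  · simp

lemma continuous_of_mem_monomials {f : (ι → ℂ) → ℂ} (hf : f ∈ monomials ι) : Continuous f := by
  obtain ⟨c, -, α, β, h⟩ := hf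
  rw [funext h]
  have := Complex.continuous_conj
  fun_prop

/-! ### Gaussian integrability -/

lemma integrable_pow_mul_gauss (n : ℕ) {c : ℝ} (hc : 0 < c) :
    Integrable (fun z : ℂ => ‖z‖ ^ n * Real.exp (-c * ‖z‖ ^ 2)) := by
  have h1 : Integrable (fun z : ℂ => Real.exp (-(c / 2) * ‖z‖ ^ 2)) := by
    have := (GaussianFourier.integrable_cexp_neg_mul_sq_norm_add (V := ℂ)
      (b := ((c / 2 : ℝ) : ℂ)) (by simpa using hc) 0 0).norm
    refine this.congr (Eventually.of_forall fun z => ?_)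
    simp only [Complex.norm_exp]
    congr 1
    rw [← Complex.ofReal_pow, ← Complex.ofReal_neg, ← Complex.ofReal_mul, zero_mul, add_zero,
      Complex.ofReal_re]
  refine (h1.const_mul ((n.factorial : ℝ) / (c / 2) ^ n * Real.exp (c / 2))).mono'
    (by fun_prop) (Eventually.of_forall fun z => ?_)
  rw [Real.norm_of_nonneg (by positivity)]
  have h2 : ‖z‖ ^ n ≤ (1 + ‖z‖ ^ 2) ^ n :=
    pow_le_pow_left₀ (norm_nonneg z) (by nlinarith [sq_nonneg (‖z‖ - 1), norm_nonneg z]) n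
  have h3 := Real.pow_div_factorial_le_exp (c / 2 * (1 + ‖z‖ ^ 2)) (by positivity) n
  have h4 : (1 + ‖z‖ ^ 2) ^ n ≤
      (n.factorial : ℝ) / (c / 2) ^ n * Real.exp (c / 2 * (1 + ‖z‖ ^ 2)) := by
    rw [mul_pow, div_le_iff₀ (by positivity)] at h3
    rw [div_mul_eq_mul_div, le_div_iff₀ (by positivity)]
    linarith
  calc ‖z‖ ^ n * Real.exp (-c * ‖z‖ ^ 2)
      ≤ ((n.factorial : ℝ) / (c / 2) ^ n * Real.exp (c / 2 * (1 + ‖z‖ ^ 2)))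
          * Real.exp (-c * ‖z‖ ^ 2) := by gcongr; exact h2.trans h4
    _ = _ := by
      rw [mul_assoc, mul_assoc, ← Real.exp_add, ← Real.exp_add]
      ring_nf

lemma integrable_monomial_mul_gauss {f : (ι → ℂ) → ℂ} (hf : f ∈ monomials ι) {c : ℝ}
    (hc : 0 < c) : Integrable (fun φ => ‖f φ‖ * Real.exp (-c * ∑ z, ‖φ z‖ ^ 2)) := by
  obtain ⟨a, ha, α, β, h⟩ := hf
  have := (Integrable.fintype_prod (μ := fun _ : ι => (volume : Measure ℂ))
    (fun z => integrable_pow_mul_gauss (α z + β z) hc)).const_mul a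
  refine this.congr (Eventually.of_forall fun φ => ?_)
  simp only [h, norm_mul, norm_prod, norm_pow, RCLike.norm_conj, Complex.norm_real,
    Real.norm_of_nonneg ha, pow_add, Finset.prod_mul_distrib, Finset.mul_sum, Real.exp_sum]
  ring

/-! ### Integrals against radial weights -/

/-- A monomial carrying a nonzero charge at some site integrates to zero against a weight that
depends only on the moduli: rotate the phase at that site. -/
lemma integral_eq_zero_of_charge {w : (ι → ℂ) → ℝ}
    (hw : ∀ φ ψ : ι → ℂ, (∀ z, ‖φ z‖ = ‖ψ z‖) → w φ = w ψ) {f : (ι → ℂ) → ℂ} {c : ℝ}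
    {α β : ι → ℕ} (h : ∀ φ, f φ = (c : ℂ) * ∏ z, (conj (φ z) ^ α z * φ z ^ β z))
    {z₀ : ι} (hz : α z₀ ≠ β z₀) : ∫ φ, f φ * (w φ : ℂ) = 0 := by
  -- with this angle, rotating `φ z₀` changes the sign of the monomial
  set θ : ℝ := Real.pi / ((β z₀ : ℝ) - α z₀) with hθ
  let u : ι → Circle := Function.update 1 z₀ (Circle.exp θ)
  let e : (ι → ℂ) ≃ᵐ (ι → ℂ) :=
    MeasurableEquiv.piCongrRight fun z => (rotation (u z)).toHomeomorph.toMeasurableEquiv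
  have he : ∀ φ z, e φ z = (u z : ℂ) * φ z := fun φ z => rotation_apply _ _
  have hmp : MeasurePreserving e :=
    volume_preserving_pi fun z => (rotation (u z)).measurePreserving
  have hne : (β z₀ : ℝ) - α z₀ ≠ 0 := sub_ne_zero.2 (by exact_mod_cast hz.symm)
  have hfac : ∏ z, (conj (u z : ℂ) ^ α z * (u z : ℂ) ^ β z) = -1 := by
    rw [Finset.prod_eq_single z₀]
    · simp only [u, Function.update_self, Circle.coe_exp, ← Complex.exp_conj, map_mul,
        Complex.conj_I, Complex.conj_ofReal, ← Complex.exp_nat_mul, ← Complex.exp_add]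
      rw [← Complex.exp_pi_mul_I]
      congr 1
      have : (Real.pi : ℂ) = θ * ((β z₀ : ℂ) - α z₀) := by
        rw [hθ]
        have : ((β z₀ : ℂ) - α z₀) ≠ 0 := by exact_mod_cast hne
        push_cast
        field_simp
      rw [this]
      ring
    · intro z _ hz'
      simp [u, Function.update_of_ne hz']
    · simp
  have hsign : ∀ φ, f (e φ) * (w (e φ) : ℂ) = -(f φ * (w φ : ℂ)) := by
    intro φ
    have hwe : w (e φ) = w φ := hw _ _ fun z => by rw [he, norm_mul, Circle.norm_coe, one_mul]
    rw [hwe, h, h]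
    have : ∏ z, (conj (e φ z) ^ α z * e φ z ^ β z)
        = (∏ z, (conj (u z : ℂ) ^ α z * (u z : ℂ) ^ β z))
          * ∏ z, (conj (φ z) ^ α z * φ z ^ β z) := by
      rw [← Finset.prod_mul_distrib]
      refine Finset.prod_congr rfl fun z _ => ?_
      rw [he, map_mul]
      ring
    rw [this, hfac]
    ring
  have key := hmp.integral_comp' (fun φ => f φ * (w φ : ℂ))
  simp only [hsign, integral_neg] at key
  exact self_eq_neg.1 key.symm

open scoped ComplexOrder

lemma integrable_posPoly_mul {w : (ι → ℂ) → ℝ} (hwm : Continuous w) (hw0 : 0 ≤ w) {c : ℝ}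
    (hc : 0 < c) (hwc : ∀ φ, w φ ≤ Real.exp (-c * ∑ z, ‖φ z‖ ^ 2)) {f : (ι → ℂ) → ℂ}
    (hf : f ∈ posPoly ι) : Integrable (fun φ => f φ * (w φ : ℂ)) := by
  rw [posPoly, Submonoid.subsemiringClosure_mem] at hf
  induction hf using AddSubmonoid.closure_induction with
  | mem f hf =>
    have := continuous_of_mem_monomials hf
    refine (integrable_monomial_mul_gauss hf hc).mono'
      (Continuous.aestronglyMeasurable (by fun_prop)) (Eventually.of_forall fun φ => ?_)
    rw [norm_mul, Complex.norm_real, Real.norm_of_nonneg (hw0 φ)]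
    exact mul_le_mul_of_nonneg_left (hwc φ) (norm_nonneg _)
  | zero => simp
  | add f g _ _ ihf ihg =>
    simp only [Pi.add_apply, add_mul]
    exact ihf.add ihg

/-- Integrals of polynomials with nonnegative coefficients are nonnegative and monotone in the
weight, for weights depending only on the moduli: only monomials `∏ z, |φ z| ^ (2 * α z)`
contribute. -/
lemma integral_posPoly_le {w₁ w₀ : (ι → ℂ) → ℝ} (hm₁ : Continuous w₁) (hm₀ : Continuous w₀)
    (hr₁ : ∀ φ ψ : ι → ℂ, (∀ z, ‖φ z‖ = ‖ψ z‖) → w₁ φ = w₁ ψ)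
    (hr₀ : ∀ φ ψ : ι → ℂ, (∀ z, ‖φ z‖ = ‖ψ z‖) → w₀ φ = w₀ ψ)
    (h0 : 0 ≤ w₁) (h10 : w₁ ≤ w₀) {c : ℝ} (hc : 0 < c)
    (hwc : ∀ φ, w₀ φ ≤ Real.exp (-c * ∑ z, ‖φ z‖ ^ 2)) {f : (ι → ℂ) → ℂ}
    (hf : f ∈ posPoly ι) :
    0 ≤ ∫ φ, f φ * (w₁ φ : ℂ) ∧ ∫ φ, f φ * (w₁ φ : ℂ) ≤ ∫ φ, f φ * (w₀ φ : ℂ) := by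
  have hi₁ : ∀ {f}, f ∈ posPoly ι → Integrable (fun φ => f φ * (w₁ φ : ℂ)) :=
    fun hf => integrable_posPoly_mul hm₁ h0 hc (fun φ => (h10 φ).trans (hwc φ)) hf
  have hi₀ : ∀ {f}, f ∈ posPoly ι → Integrable (fun φ => f φ * (w₀ φ : ℂ)) :=
    fun hf => integrable_posPoly_mul hm₀ (h0.trans h10) hc hwc hf
  rw [posPoly, Submonoid.subsemiringClosure_mem] at hf
  induction hf using AddSubmonoid.closure_induction with
  | mem f hf =>
    have hint₁ := hi₁ (mem_posPoly_of_mem_monomials hf)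
    have hint₀ := hi₀ (mem_posPoly_of_mem_monomials hf)
    obtain ⟨a, ha, α, β, h⟩ := hf
    by_cases hab : α = β
    · subst hab
      have hf0 : ∀ φ, 0 ≤ f φ := by
        intro φ
        have : f φ = ((a * ∏ z, Complex.normSq (φ z) ^ α z : ℝ) : ℂ) := by
          rw [h]
          push_cast
          congr 1
          refine Finset.prod_congr rfl fun z _ => ?_
          rw [← mul_pow, Complex.normSq_eq_conj_mul_self]
        rw [this]
        exact Complex.zero_le_real.2
          (mul_nonneg ha (Finset.prod_nonneg fun z _ => pow_nonneg (Complex.normSq_nonneg _) _))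
      refine ⟨integral_nonneg fun φ => mul_nonneg (hf0 φ) (Complex.zero_le_real.2 (h0 φ)), ?_⟩
      exact integral_mono hint₁ hint₀ fun φ =>
        mul_le_mul_of_nonneg_left (Complex.real_le_real.2 (h10 φ)) (hf0 φ)
    · obtain ⟨z₀, hz⟩ := Function.ne_iff.1 hab
      rw [integral_eq_zero_of_charge hr₁ h hz, integral_eq_zero_of_charge hr₀ h hz]
      exact ⟨le_rfl, le_rfl⟩
  | zero => simp
  | add f g hf hg ihf ihg =>
    rw [← Submonoid.subsemiringClosure_mem] at hf hg
    simp only [Pi.add_apply, add_mul]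
    rw [integral_add (hi₁ hf) (hi₁ hg), integral_add (hi₀ hf) (hi₀ hg)]
    exact ⟨add_nonneg ihf.1 ihg.1, add_le_add ihf.2 ihg.2⟩

/-- Dominated convergence for the Taylor polynomials of `exp G`: the bound on `G` costs part of the
Gaussian decay of the weight, leaving the rate `c - b > 0`. -/
lemma tendsto_integral_taylor {w : (ι → ℂ) → ℝ} (hm : Continuous w) (h0 : 0 ≤ w)
    {c b : ℝ} (hbc : b < c)
    (hwc : ∀ φ, w φ ≤ Real.exp (-c * ∑ z, ‖φ z‖ ^ 2)) {f G : (ι → ℂ) → ℂ}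
    (hf : f ∈ monomials ι) (hG : Continuous G) (hGb : ∀ φ, ‖G φ‖ ≤ b * ∑ z, ‖φ z‖ ^ 2) :
    Tendsto
      (fun N : ℕ => ∫ φ, (f φ * ∑ n ∈ Finset.range N, G φ ^ n / (n.factorial : ℂ)) * (w φ : ℂ))
      atTop (𝓝 (∫ φ, (f φ * Complex.exp (G φ)) * (w φ : ℂ))) := by
  have hfc := continuous_of_mem_monomials hf
  refine tendsto_integral_of_dominated_convergence
    (fun φ => ‖f φ‖ * Real.exp (-(c - b) * ∑ z, ‖φ z‖ ^ 2)) (fun N => ?_)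
    (integrable_monomial_mul_gauss hf (sub_pos.2 hbc)) (fun N => ?_) ?_
  · exact Continuous.aestronglyMeasurable (by fun_prop)
  · refine Eventually.of_forall fun φ => ?_
    rw [norm_mul, norm_mul, Complex.norm_real, Real.norm_of_nonneg (h0 φ), mul_assoc]
    refine mul_le_mul_of_nonneg_left ?_ (norm_nonneg _)
    have h1 : ‖∑ n ∈ Finset.range N, G φ ^ n / (n.factorial : ℂ)‖
        ≤ Real.exp (b * ∑ z, ‖φ z‖ ^ 2) := by
      refine (norm_sum_le _ _).trans (le_trans ?_ (Real.exp_le_exp.2 (hGb φ)))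
      refine le_trans (le_of_eq ?_) (Real.sum_le_exp_of_nonneg (norm_nonneg (G φ)) N)
      simp
    calc _ ≤ Real.exp (b * ∑ z, ‖φ z‖ ^ 2) * Real.exp (-c * ∑ z, ‖φ z‖ ^ 2) :=
          mul_le_mul h1 (hwc φ) (h0 φ) (Real.exp_pos _).le
      _ = _ := by rw [← Real.exp_add]; ring_nf
  · refine Eventually.of_forall fun φ => ?_
    have := (NormedSpace.expSeries_div_hasSum_exp (G φ)).tendsto_sum_nat
    rw [← Complex.exp_eq_exp_ℂ] at this
    exact (this.const_mul (f φ)).mul_const _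

/-- The comparison of `integral_posPoly_le`, for a monomial times `exp G` with `G` a polynomial
with nonnegative coefficients that is dominated by the Gaussian decay of the weights. -/
lemma integral_exp_le {w₁ w₀ : (ι → ℂ) → ℝ} (hm₁ : Continuous w₁) (hm₀ : Continuous w₀)
    (hr₁ : ∀ φ ψ : ι → ℂ, (∀ z, ‖φ z‖ = ‖ψ z‖) → w₁ φ = w₁ ψ)
    (hr₀ : ∀ φ ψ : ι → ℂ, (∀ z, ‖φ z‖ = ‖ψ z‖) → w₀ φ = w₀ ψ)
    (h0 : 0 ≤ w₁) (h10 : w₁ ≤ w₀) {b c : ℝ} (hb : 0 ≤ b) (hbc : b < c)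
    (hwc : ∀ φ, w₀ φ ≤ Real.exp (-c * ∑ z, ‖φ z‖ ^ 2)) {f G : (ι → ℂ) → ℂ}
    (hf : f ∈ monomials ι) (hG : Continuous G) (hGp : G ∈ posPoly ι)
    (hGb : ∀ φ, ‖G φ‖ ≤ b * ∑ z, ‖φ z‖ ^ 2) :
    0 ≤ ∫ φ, (f φ * Complex.exp (G φ)) * (w₁ φ : ℂ) ∧
      ∫ φ, (f φ * Complex.exp (G φ)) * (w₁ φ : ℂ)
        ≤ ∫ φ, (f φ * Complex.exp (G φ)) * (w₀ φ : ℂ) := by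
  have hP : ∀ N : ℕ,
      (fun φ => f φ * ∑ n ∈ Finset.range N, G φ ^ n / (n.factorial : ℂ)) ∈ posPoly ι := by
    intro N
    have : (fun φ => f φ * ∑ n ∈ Finset.range N, G φ ^ n / (n.factorial : ℂ))
        = f * ∑ n ∈ Finset.range N,
            (fun _ : ι → ℂ => (((n.factorial : ℝ)⁻¹ : ℝ) : ℂ)) * G ^ n := by
      ext φ
      simp only [Pi.mul_apply, Finset.sum_apply, Pi.pow_apply]
      congr 1
      refine Finset.sum_congr rfl fun n _ => ?_
      push_cast
      rw [div_eq_inv_mul]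
    rw [this]
    exact mul_mem (mem_posPoly_of_mem_monomials hf) (sum_mem fun n _ =>
      mul_mem (mem_posPoly_of_mem_monomials (const_mem_monomials (by positivity)))
        (pow_mem hGp n))
  have key := fun N => integral_posPoly_le hm₁ hm₀ hr₁ hr₀ h0 h10 (hb.trans_lt hbc) hwc (hP N)
  have t₁ := tendsto_integral_taylor hm₁ h0 hbc (fun φ => (h10 φ).trans (hwc φ)) hf hG hGb
  have t₀ := tendsto_integral_taylor hm₀ (h0.trans h10) hbc hwc hf hG hGb
  exact ⟨ge_of_tendsto' t₁ fun N => (key N).1, le_of_tendsto_of_tendsto' t₁ t₀ fun N => (key N).2⟩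

end Monomials

/-! ### Positivity of the interaction -/

section Torus

variable {d L : ℕ} [NeZero L]

/-- The character `x ↦ e^{2πi ξ·x/L}` of the torus, as a product over coordinates. -/
def torChar (ξ x : Tor d L) : ℂ := ∏ j, (ZMod.stdAddChar (ξ j * x j) : ℂ)

lemma exp_eq_torChar (ξ x : Tor d L) :
    Complex.exp (2 * (Real.pi : ℂ) * Complex.I *
      (∑ j : Fin d, (((ξ j).val : ℕ) : ℂ) * (((x j).val : ℕ) : ℂ)) / (L : ℂ)) = torChar ξ x := by
  rw [Finset.mul_sum, Finset.sum_div, Complex.exp_sum, torChar]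
  refine Finset.prod_congr rfl fun j _ => ?_
  have h := ZMod.stdAddChar_coe (N := L) (((ξ j).val * (x j).val : ℕ) : ℤ)
  push_cast at h
  rw [ZMod.natCast_zmod_val, ZMod.natCast_zmod_val] at h
  exact h.symm

lemma torChar_add (ξ x y : Tor d L) : torChar ξ (x + y) = torChar ξ x * torChar ξ y := by
  simp [torChar, mul_add, AddChar.map_add_eq_mul, Finset.prod_mul_distrib]

lemma conj_torChar (ξ x : Tor d L) : conj (torChar ξ x) = torChar ξ (-x) := by
  simp [torChar, map_prod, AddChar.map_neg_eq_conj]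

lemma sum_torChar (x : Tor d L) :
    ∑ ξ, torChar ξ x = if x = 0 then (Fintype.card (Tor d L) : ℂ) else 0 := by
  have h : ∑ ξ, torChar ξ x = ∏ j, ∑ k : ZMod L, (ZMod.stdAddChar (k * x j) : ℂ) := by
    rw [Finset.prod_univ_sum]
    simp [torChar]
  rw [h]
  simp_rw [AddChar.sum_mulShift _ (ZMod.isPrimitive_stdAddChar L)]
  split_ifs with hx
  · subst hx
    simp
  · obtain ⟨j, hj⟩ := Function.ne_iff.1 hx
    exact Finset.prod_eq_zero (Finset.mem_univ j) (by rw [if_neg (by simpa using hj), Nat.cast_zero])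

open scoped ComplexOrder

/-- Plancherel's identity diagonalises the convolution form of `v`, with the nonnegative
eigenvalues `dft d L v ξ`. -/
lemma quad_nonneg {v : Tor d L → ℝ} (hv : IsPosType d L v) (n : Tor d L → ℝ) :
    0 ≤ ∑ x, ∑ y, n x * v (x - y) * n y := by
  have h1 : ∑ ξ, dft d L v ξ *
      ((∑ y, (n y : ℂ) * torChar ξ y) * conj (∑ x, (n x : ℂ) * torChar ξ x))
      = (Fintype.card (Tor d L) : ℂ) * ((∑ x, ∑ y, n x * v (x - y) * n y : ℝ) : ℂ) := by
    have h2 : ∀ ξ, dft d L v ξ *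
        ((∑ y, (n y : ℂ) * torChar ξ y) * conj (∑ x, (n x : ℂ) * torChar ξ x))
        = ∑ x, ∑ y, ∑ z, (n x : ℂ) * v z * n y * torChar ξ (z + y + -x) := by
      intro ξ
      simp only [dft, exp_eq_torChar]
      simp only [map_sum, map_mul, Complex.conj_ofReal, conj_torChar,
        torChar_add, Finset.sum_mul, Finset.mul_sum]
      exact Finset.sum_congr rfl fun x _ => Finset.sum_congr rfl fun y _ =>
        Finset.sum_congr rfl fun z _ => by ring
    simp_rw [h2]
    rw [Finset.sum_comm]
    push_cast
    rw [Finset.mul_sum]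
    refine Finset.sum_congr rfl fun x _ => ?_
    rw [Finset.sum_comm, Finset.mul_sum]
    refine Finset.sum_congr rfl fun y _ => ?_
    rw [Finset.sum_comm]
    simp_rw [← Finset.mul_sum, sum_torChar]
    rw [Finset.sum_eq_single (x - y)]
    · simp
      ring
    · intro z _ hz
      rw [if_neg, mul_zero]
      intro h
      exact hz (by rw [← sub_eq_zero, ← h]; abel)
    · simp
  have h3 : (0 : ℂ) ≤ ∑ ξ, dft d L v ξ *
      ((∑ y, (n y : ℂ) * torChar ξ y) * conj (∑ x, (n x : ℂ) * torChar ξ x)) := by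
    refine Finset.sum_nonneg fun ξ _ => mul_nonneg ?_ ?_
    · exact Complex.nonneg_iff.2 ⟨(hv ξ).2, (hv ξ).1.symm⟩
    · rw [Complex.mul_conj]
      exact Complex.zero_le_real.2 (Complex.normSq_nonneg _)
  rw [h1, ← Complex.ofReal_natCast, ← Complex.ofReal_mul, Complex.zero_le_real] at h3
  exact nonneg_of_mul_nonneg_right h3 (by exact_mod_cast Fintype.card_pos)

/-! ### The Gaussian weight -/

/-- The off-diagonal (hopping) part `½ ∑_{|x-y|=1} conj φ(x) φ(y)` of the Gaussian exponent. -/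
def hop (d L : ℕ) [NeZero L] (φ : Tor d L → ℂ) : ℂ :=
  ∑ x, ∑ j : Fin d,
    (1 / 2 : ℂ) * (conj (φ x) * φ (x + unitVec d L j) + conj (φ x) * φ (x - unitVec d L j))

lemma lap_mulVec (φ : Tor d L → ℂ) (x : Tor d L) :
    (lap d L).mulVec φ x
      = (∑ j, (φ (x + unitVec d L j) + φ (x - unitVec d L j))) - 2 * d * φ x := by
  simp only [Matrix.mulVec, dotProduct, lap, sub_mul, Finset.sum_sub_distrib, Finset.sum_mul]
  rw [Finset.sum_comm]
  simp [add_mul, Finset.sum_add_distrib]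

lemma exponent_eq (κ : ℝ) (φ : Tor d L → ℂ) :
    ∑ x, conj (φ x) * (((1 / 2 : ℂ) • lap d L - (κ : ℂ) • 1).mulVec φ x)
      = hop d L φ + ((-(d + κ) * ∑ x, ‖φ x‖ ^ 2 : ℝ) : ℂ) := by
  push_cast
  rw [hop, Finset.mul_sum, ← Finset.sum_add_distrib]
  refine Finset.sum_congr rfl fun x _ => ?_
  simp only [Matrix.sub_mulVec, Matrix.smul_mulVec, Matrix.one_mulVec, Pi.sub_apply,
    Pi.smul_apply, lap_mulVec, smul_eq_mul]
  rw [← Complex.conj_mul', ← Finset.mul_sum]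
  simp_rw [← mul_add]
  rw [← Finset.mul_sum]
  ring

lemma norm_hop_le (φ : Tor d L → ℂ) : ‖hop d L φ‖ ≤ d * ∑ x, ‖φ x‖ ^ 2 := by
  have h1 : ∀ x, ∀ j : Fin d, ‖(1 / 2 : ℂ) * (conj (φ x) * φ (x + unitVec d L j)
      + conj (φ x) * φ (x - unitVec d L j))‖
      ≤ 1 / 2 * ‖φ x‖ ^ 2 + 1 / 4 * ‖φ (x + unitVec d L j)‖ ^ 2
        + 1 / 4 * ‖φ (x - unitVec d L j)‖ ^ 2 := by
    intro x j
    have h := norm_add_le (conj (φ x) * φ (x + unitVec d L j))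
      (conj (φ x) * φ (x - unitVec d L j))
    rw [norm_mul, norm_mul, RCLike.norm_conj] at h
    rw [norm_mul]
    norm_num
    nlinarith [sq_nonneg (‖φ x‖ - ‖φ (x + unitVec d L j)‖),
      sq_nonneg (‖φ x‖ - ‖φ (x - unitVec d L j)‖)]
  have h2 : ∀ j : Fin d, ∑ x, ‖φ (x + unitVec d L j)‖ ^ 2 = ∑ x, ‖φ x‖ ^ 2 := fun j =>
    Fintype.sum_equiv (Equiv.addRight (unitVec d L j)) _ _ fun _ => rfl
  have h3 : ∀ j : Fin d, ∑ x, ‖φ (x - unitVec d L j)‖ ^ 2 = ∑ x, ‖φ x‖ ^ 2 := fun j =>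
    Fintype.sum_equiv (Equiv.subRight (unitVec d L j)) _ _ fun _ => rfl
  calc ‖hop d L φ‖ ≤ ∑ x, ∑ j : Fin d, (1 / 2 * ‖φ x‖ ^ 2
        + 1 / 4 * ‖φ (x + unitVec d L j)‖ ^ 2 + 1 / 4 * ‖φ (x - unitVec d L j)‖ ^ 2) :=
      (norm_sum_le _ _).trans (Finset.sum_le_sum fun x _ =>
        (norm_sum_le _ _).trans (Finset.sum_le_sum fun j _ => h1 x j))
    _ = ∑ j : Fin d, ∑ x, ‖φ x‖ ^ 2 := by
      rw [Finset.sum_comm]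
      refine Finset.sum_congr rfl fun j _ => ?_
      simp only [Finset.sum_add_distrib, ← Finset.mul_sum]
      rw [h2, h3]
      ring
    _ = _ := by simp

lemma continuous_hop : Continuous (hop d L) := by
  unfold hop
  have := Complex.continuous_conj
  fun_prop

lemma hop_mem_posPoly : hop d L ∈ posPoly (Tor d L) := by
  have : hop d L = ∑ x, ∑ j : Fin d, (fun _ => ((1 / 2 : ℝ) : ℂ)) *
      ((fun φ => conj (φ x)) * (fun φ => φ (x + unitVec d L j))
        + (fun φ => conj (φ x)) * (fun φ => φ (x - unitVec d L j))) := by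
    ext φ
    simp [hop, Finset.sum_apply]
  rw [this]
  have hc := fun x : Tor d L => mem_posPoly_of_mem_monomials (conj_coord_mem_monomials x)
  have hx := fun x : Tor d L => mem_posPoly_of_mem_monomials (coord_mem_monomials x)
  exact sum_mem fun x _ => sum_mem fun j _ =>
    mul_mem (mem_posPoly_of_mem_monomials (const_mem_monomials (by norm_num)))
      (add_mem (mul_mem (hc x) (hx _)) (mul_mem (hc x) (hx _)))

lemma lap_isHermitian : (lap d L).IsHermitian := by
  ext x y
  simp only [Matrix.conjTranspose_apply, lap, star_sub, star_sum, star_add, apply_ite star,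
    star_one, star_zero]
  congr 1
  · refine Finset.sum_congr rfl fun j _ => ?_
    rw [add_comm]
    congr 1
    · exact if_congr ⟨fun h => by rw [h]; abel, fun h => by rw [h]; abel⟩ rfl rfl
    · exact if_congr ⟨fun h => by rw [h]; abel, fun h => by rw [h]; abel⟩ rfl rfl
  · simp [eq_comm]

/-- The Gaussian normalisation constant is nonnegative because `-Δ/2 + κ` is positive. -/
lemma norm_const_nonneg {κ : ℝ} (hκ : 0 < κ) :
    0 ≤ (((Real.pi : ℂ) ^ Fintype.card (Tor d L))
      * ((-(1 / 2 : ℂ)) • lap d L + (κ : ℂ) • 1)⁻¹.det)⁻¹ := by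
  have hA : ((-(1 / 2 : ℂ)) • lap d L + (κ : ℂ) • 1).PosSemidef := by
    have hH : ((-(1 / 2 : ℂ)) • lap d L + (κ : ℂ) • 1).IsHermitian := by
      refine Matrix.IsHermitian.add ?_ ?_
      · rw [Matrix.IsHermitian, Matrix.conjTranspose_smul, lap_isHermitian.eq]
        simp
      · rw [Matrix.IsHermitian, Matrix.conjTranspose_smul, Matrix.conjTranspose_one]
        simp
    refine Matrix.PosSemidef.of_dotProduct_mulVec_nonneg hH fun φ => ?_
    rw [Complex.nonneg_iff]
    refine ⟨?_, (hH.im_star_dotProduct_mulVec_self φ).symm⟩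
    have h1 : star φ ⬝ᵥ ((-(1 / 2 : ℂ)) • lap d L + (κ : ℂ) • 1).mulVec φ
        = -(hop d L φ + ((-(d + κ) * ∑ x, ‖φ x‖ ^ 2 : ℝ) : ℂ)) := by
      rw [← exponent_eq, ← Finset.sum_neg_distrib]
      refine Finset.sum_congr rfl fun x _ => ?_
      have : (-(1 / 2 : ℂ)) • lap d L + (κ : ℂ) • (1 : Matrix (Tor d L) (Tor d L) ℂ)
          = -((1 / 2 : ℂ) • lap d L - (κ : ℂ) • 1) := by
        rw [neg_smul]; abel
      rw [this, Matrix.neg_mulVec]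
      simp
    rw [h1, Complex.neg_re, Complex.add_re, Complex.ofReal_re]
    have h2 := (Complex.re_le_norm (hop d L φ)).trans (norm_hop_le φ)
    have h3 : 0 ≤ κ * ∑ x, ‖φ x‖ ^ 2 :=
      mul_nonneg hκ.le (Finset.sum_nonneg fun x _ => sq_nonneg _)
    linarith
  refine inv_nonneg.2 (mul_nonneg (pow_nonneg (Complex.zero_le_real.2 Real.pi_pos.le) _) ?_)
  exact hA.inv.det_nonneg

/-- The radial part of the total weight: the diagonal Gaussian factor times the interaction. -/
def radWeight (v : Tor d L → ℝ) (κ lam : ℝ) (φ : Tor d L → ℂ) : ℝ :=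
  Real.exp (-(d + κ) * ∑ x, ‖φ x‖ ^ 2)
    * Real.exp (-(lam / 2) * ∑ x, ∑ y, ‖φ x‖ ^ 2 * v (x - y) * ‖φ y‖ ^ 2)

lemma continuous_radWeight (v : Tor d L → ℝ) (κ lam : ℝ) : Continuous (radWeight v κ lam) := by
  unfold radWeight
  fun_prop

lemma radWeight_congr (v : Tor d L → ℝ) (κ lam : ℝ) (φ ψ : Tor d L → ℂ)
    (h : ∀ z, ‖φ z‖ = ‖ψ z‖) : radWeight v κ lam φ = radWeight v κ lam ψ := by
  simp only [radWeight, h]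

lemma GammaHat_eq (v : Tor d L → ℝ) (κ lam : ℝ) (p : ℕ) (x y : Fin p → Tor d L) :
    GammaHat d L v κ lam p x y
      = (((Real.pi : ℂ) ^ Fintype.card (Tor d L))
          * ((-(1 / 2 : ℂ)) • lap d L + (κ : ℂ) • 1)⁻¹.det)⁻¹
        * ∫ φ, (((∏ i, conj (φ (y i))) * ∏ i, φ (x i)) * Complex.exp (hop d L φ))
            * (radWeight v κ lam φ : ℂ) := by
  rw [GammaHat, ← integral_const_mul]
  congr 1
  ext φ
  have hI : intWeightL d L v lam φ
      = Complex.exp ((-(lam / 2) * ∑ x, ∑ y, ‖φ x‖ ^ 2 * v (x - y) * ‖φ y‖ ^ 2 : ℝ) : ℂ) := by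
    rw [intWeightL]
    simp only [Complex.normSq_eq_norm_sq]
    push_cast
    rfl
  rw [gaussWeight, exponent_eq, Complex.exp_add, hI, radWeight]
  push_cast
  ring

end Torus

/-! ### The correlation inequality -/

open scoped ComplexOrder in
/-- **Correlation inequality** (Corollary 2.2): for `v` even and of positive type,
`κ > 0` and `λ ≥ 0`, the unnormalized classical correlation function is real and
satisfies `0 ≤ (Γ̂_p^{cl,λ})_{x,y} ≤ (Γ̂_p^{cl,0})_{x,y}`. -/
theorem correlation_inequality
    (d L : ℕ) (hd : 1 ≤ d) [NeZero L] (κ lam : ℝ) (hκ : 0 < κ) (hlam : 0 ≤ lam)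
    (v : Tor d L → ℝ) (hv_even : ∀ x, v (-x) = v x) (hv_pos : IsPosType d L v)
    (p : ℕ) (hp : 1 ≤ p) (x y : Fin p → Tor d L) :
    (GammaHat d L v κ lam p x y).im = 0 ∧
      0 ≤ (GammaHat d L v κ lam p x y).re ∧
      (GammaHat d L v κ lam p x y).re ≤ (GammaHat d L v κ 0 p x y).re := by
  have hmon : (fun φ : Tor d L → ℂ => (∏ i, conj (φ (y i))) * ∏ i, φ (x i))
      ∈ monomials (Tor d L) := by
    have : (fun φ : Tor d L → ℂ => (∏ i, conj (φ (y i))) * ∏ i, φ (x i))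
        = (∏ i, fun φ => conj (φ (y i))) * ∏ i, fun φ => φ (x i) := by
      ext φ
      simp [Finset.prod_apply]
    rw [this]
    exact mul_mem (prod_mem fun i _ => conj_coord_mem_monomials _)
      (prod_mem fun i _ => coord_mem_monomials _)
  have h10 : radWeight v κ lam ≤ radWeight v κ 0 := by
    intro φ
    refine mul_le_mul_of_nonneg_left (Real.exp_le_exp.2 ?_) (Real.exp_pos _).le
    have := mul_nonneg hlam (quad_nonneg hv_pos fun x => ‖φ x‖ ^ 2)
    linarith
  have key := integral_exp_le (b := d) (c := d + κ) (continuous_radWeight v κ lam)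
    (continuous_radWeight v κ 0) (radWeight_congr v κ lam) (radWeight_congr v κ 0)
    (fun φ => mul_nonneg (Real.exp_pos _).le (Real.exp_pos _).le) h10 (Nat.cast_nonneg d)
    (lt_add_of_pos_right _ hκ) (fun φ => by simp [radWeight]) hmon continuous_hop
    hop_mem_posPoly norm_hop_le
  have hC := norm_const_nonneg (d := d) (L := L) hκ
  have h1 := mul_nonneg hC key.1
  have h2 := mul_le_mul_of_nonneg_left key.2 hC
  rw [← GammaHat_eq] at h1 h2
  rw [← GammaHat_eq] at h2
  exact ⟨(Complex.nonneg_iff.1 h1).2.symm, (Complex.nonneg_iff.1 h1).1, (Complex.le_def.1 h2).1⟩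
end
end

section
/- Let C be a complex n×n matrix whose Hermitian real part Re C = (C + C*)/2 is positive definite. Then C is invertible and ∫_{ℂⁿ} e^{−⟨z, C^{−1} z⟩} dz = πⁿ det C, where ⟨z,w⟩ = ∑_i conj(z_i) w_i and dz denotes Lebesgue measure on ℂⁿ ≅ ℝ^{2n}. -/
/-!
The real part `H` of `C` is positive definite and `C = H + iK` with `K` Hermitian. Writing
`H = Bᴴ B` with `B` invertible and diagonalizing the Hermitian matrix `(B⁻¹)ᴴ K B⁻¹` by a unitary
gives a congruence `C = Pᴴ D P` with `P` invertible and `D` diagonal with entries `1 + i dⱼ`,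
`dⱼ` real (`exists_congr_diagonal`). In particular `C` is invertible, and
`⟨z, C⁻¹ z⟩ = ⟨w, D⁻¹ w⟩` for `w = (P⁻¹)ᴴ z`. This substitution is complex linear, so its real
Jacobian is `|det P|⁻²` (`integral_comp_mulVec`), and by Fubini what remains is a product of
one-variable integrals `∫ exp (-b|w|²) = π / b`, with `b = (1 + i dⱼ)⁻¹` of positive real part.
-/

open scoped BigOperators ComplexConjugate Real ComplexOrder
open MeasureTheory Matrix

/-- A matrix with positive definite Hermitian part is congruent to a diagonal matrix whose entries
have real part `1`: positive definite `H` and Hermitian `K` are simultaneously diagonalizable by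
congruence. -/
theorem exists_congr_diagonal {n : ℕ} (C : Matrix (Fin n) (Fin n) ℂ)
    (hC : (((1 : ℂ) / 2) • (C + Cᴴ)).PosDef) :
    ∃ (P : Matrix (Fin n) (Fin n) ℂ) (d : Fin n → ℝ), IsUnit P.det ∧
      C = Pᴴ * diagonal (fun i => 1 + (d i : ℂ) * Complex.I) * P := by
  obtain ⟨B, hB, hH⟩ : ∃ B : Matrix (Fin n) (Fin n) ℂ, IsUnit B ∧
      ((1 : ℂ) / 2) • (C + Cᴴ) = Bᴴ * B := by
    open scoped Matrix.Norms.L2Operator MatrixOrder in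
    exact CStarAlgebra.isStrictlyPositive_iff_eq_star_mul_self.mp hC.isStrictlyPositive
  have hBd : IsUnit B.det := (isUnit_iff_isUnit_det B).mp hB
  -- `K` is the Hermitian matrix with `C = H + iK`.
  set K : Matrix (Fin n) (Fin n) ℂ := (-Complex.I / 2) • (C - Cᴴ) with hK
  have hKh : K.IsHermitian := by
    rw [IsHermitian, hK, conjTranspose_smul, conjTranspose_sub, conjTranspose_conjTranspose,
      ← neg_sub C, smul_neg, ← neg_smul]
    congr 1
    simp [neg_div]
  have hCK : C = Bᴴ * B + Complex.I • K := by
    rw [← hH, hK, smul_smul, mul_div_assoc', mul_neg, Complex.I_mul_I, neg_neg, ← smul_add,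
      add_add_sub_cancel, ← two_smul ℂ, smul_smul]
    norm_num
  have hL : ((B⁻¹)ᴴ * K * B⁻¹).IsHermitian := isHermitian_conjTranspose_mul_mul _ hKh
  set U : Matrix (Fin n) (Fin n) ℂ := (hL.eigenvectorUnitary).1 with hU
  have hUU : U * Uᴴ = 1 := Unitary.coe_mul_star_self hL.eigenvectorUnitary
  have hspec : (B⁻¹)ᴴ * K * B⁻¹ = U * diagonal (fun i => (hL.eigenvalues i : ℂ)) * Uᴴ := by
    have := hL.spectral_theorem
    rw [Unitary.conjStarAlgAut_apply] at this
    exact this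
  have hBB : B⁻¹ * B = 1 := nonsing_inv_mul B hBd
  have hBB' : Bᴴ * (B⁻¹)ᴴ = 1 := by rw [← conjTranspose_mul, hBB, conjTranspose_one]
  have hKd : K = Bᴴ * (U * diagonal (fun i => (hL.eigenvalues i : ℂ)) * Uᴴ) * B := by
    rw [← hspec]
    calc K = (Bᴴ * (B⁻¹)ᴴ) * K * (B⁻¹ * B) := by rw [hBB, hBB', one_mul, mul_one]
      _ = _ := by simp only [mul_assoc]
  refine ⟨Uᴴ * B, hL.eigenvalues, ?_, ?_⟩
  · rw [det_mul]
    refine IsUnit.mul (IsUnit.of_mul_eq_one_right U.det ?_) hBd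
    rw [← det_mul, hUU, det_one]
  · have hdiag : diagonal (fun i => 1 + (hL.eigenvalues i : ℂ) * Complex.I)
        = 1 + Complex.I • diagonal (fun i => (hL.eigenvalues i : ℂ)) := by
      rw [← diagonal_one, ← diagonal_smul, diagonal_add]
      congr 1
      ext i
      simp [mul_comm]
    rw [hdiag, conjTranspose_mul, conjTranspose_conjTranspose, mul_add, add_mul, mul_one]
    conv_lhs => rw [hCK, hKd]
    congr 1
    · calc Bᴴ * B = Bᴴ * (U * Uᴴ) * B := by rw [hUU, mul_one]
        _ = _ := by simp only [mul_assoc]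
    · simp only [mul_assoc, mul_smul_comm, smul_mul_assoc]

/-- Complex linear change of variables on `ℂⁿ`: the real Jacobian of `z ↦ Q z` is `|det Q|²`. -/
theorem integral_comp_mulVec {n : ℕ} (Q : Matrix (Fin n) (Fin n) ℂ) (hQ : IsUnit Q.det)
    (f : (Fin n → ℂ) → ℂ) :
    ∫ z, f (Q.mulVec z) = (Complex.normSq Q.det : ℂ)⁻¹ * ∫ w, f w := by
  let g : (Fin n → ℂ) →ₗ[ℝ] (Fin n → ℂ) := (toLin' Q).restrictScalars ℝ
  have hdet : LinearMap.det g = Complex.normSq Q.det := by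
    rw [LinearMap.det_restrictScalars, LinearMap.det_toLin', Algebra.norm_complex_apply]
  have hpos : 0 < Complex.normSq Q.det := Complex.normSq_pos.mpr hQ.ne_zero
  have hg : LinearMap.det g ≠ 0 := by rw [hdet]; exact hpos.ne'
  have hmap := Measure.map_linearMap_addHaar_eq_smul_addHaar
    (volume : Measure (Fin n → ℂ)) hg
  let e := (LinearEquiv.ofIsUnitDet (f := g) (v := Module.finBasis ℝ _) (v' := Module.finBasis ℝ _)
    (by rw [LinearMap.det_toMatrix]; exact hg.isUnit)).toContinuousLinearEquiv
  have hint : ∫ z, f (g z) = ∫ w, f w ∂(Measure.map g volume) :=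
    (e.toHomeomorph.measurableEmbedding.integral_map f).symm
  change ∫ z, f (g z) = _
  rw [hint, hmap, integral_smul_measure, hdet, ENNReal.toReal_ofReal (abs_nonneg _),
    abs_of_pos (inv_pos.mpr hpos), Complex.real_smul, Complex.ofReal_inv]

theorem integral_cexp_neg_inv_mul_normSq (d : ℝ) :
    ∫ w : ℂ, Complex.exp (-(star w * ((1 + (d : ℂ) * Complex.I)⁻¹ * w)))
      = Real.pi * (1 + (d : ℂ) * Complex.I) := by
  have hre : 0 < ((1 + (d : ℂ) * Complex.I)⁻¹).re := by
    rw [Complex.inv_re]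
    have h1 : (1 + (d : ℂ) * Complex.I).re = 1 := by simp
    have hne : (1 + (d : ℂ) * Complex.I) ≠ 0 := fun h => by simp [h] at h1
    rw [h1]
    exact div_pos one_pos (Complex.normSq_pos.mpr hne)
  have h := GaussianFourier.integral_cexp_neg_mul_sq_norm (V := ℂ) hre
  rw [Complex.finrank_real_complex] at h
  norm_num at h
  rw [← h]
  congr 1
  ext w
  congr 1
  rw [← Complex.conj_mul']
  simp only [Complex.star_def]
  ring

/-- **Complex Gaussian integral** (Lemma B.2): if the Hermitian real part
`Re C = (C + C*)/2` of a complex `n×n` matrix `C` is positive definite, then `C` is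
invertible and `∫_{ℂⁿ} e^{-⟨z, C⁻¹ z⟩} dz = πⁿ det C`. -/
theorem complex_gaussian_integral (n : ℕ) (C : Matrix (Fin n) (Fin n) ℂ)
    (hC : (((1 : ℂ) / 2) • (C + Cᴴ)).PosDef) :
    IsUnit C.det ∧
      ∫ z : Fin n → ℂ, Complex.exp (-(star z ⬝ᵥ C⁻¹.mulVec z))
        = (Real.pi : ℂ) ^ n * C.det := by
  obtain ⟨P, d, hP, hCP⟩ := exists_congr_diagonal C hC
  set b : Fin n → ℂ := fun i => 1 + (d i : ℂ) * Complex.I with hb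
  have hb0 : ∀ i, b i ≠ 0 := fun i h => by
    have := congrArg Complex.re h
    simp [hb] at this
  have hdetC : C.det = Complex.normSq P.det * ∏ i, b i := by
    rw [hCP, det_mul, det_mul, det_conjTranspose, det_diagonal, Complex.normSq_eq_conj_mul_self,
      Complex.star_def]
    ring
  have hinv : C⁻¹ = P⁻¹ * diagonal (fun i => (b i)⁻¹) * (P⁻¹)ᴴ := by
    have hD : (diagonal b)⁻¹ = diagonal (fun i => (b i)⁻¹) := by
      refine inv_eq_right_inv ?_
      rw [diagonal_mul_diagonal, ← diagonal_one]
      congr 1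
      ext i
      exact mul_inv_cancel₀ (hb0 i)
    rw [hCP, Matrix.mul_inv_rev, Matrix.mul_inv_rev, hD, conjTranspose_nonsing_inv, mul_assoc]
  have hdet0 : C.det ≠ 0 := by
    rw [hdetC]
    refine mul_ne_zero ?_ (Finset.prod_ne_zero_iff.mpr fun i _ => hb0 i)
    exact Complex.ofReal_ne_zero.mpr (Complex.normSq_pos.mpr hP.ne_zero).ne'
  refine ⟨hdet0.isUnit, ?_⟩
  have hquad : ∀ z : Fin n → ℂ, Complex.exp (-(star z ⬝ᵥ C⁻¹.mulVec z))
      = (fun w : Fin n → ℂ => ∏ i, Complex.exp (-(star (w i) * ((b i)⁻¹ * w i))))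
          ((P⁻¹)ᴴ.mulVec z) := fun z => by
    rw [hinv, mul_assoc, ← mulVec_mulVec, dotProduct_mulVec, ← mulVec_mulVec]
    have : star z ᵥ* P⁻¹ = star ((P⁻¹)ᴴ *ᵥ z) := by
      rw [star_mulVec, conjTranspose_conjTranspose]
    rw [this]
    simp only [← Complex.exp_sum, dotProduct, mulVec_diagonal, Finset.sum_neg_distrib,
      Pi.star_apply]
  have hPinv : (P⁻¹)ᴴ.det = star (P.det)⁻¹ := by
    rw [det_conjTranspose, det_nonsing_inv, Ring.inverse_eq_inv']
  rw [integral_congr_ae (Filter.Eventually.of_forall hquad),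
    integral_comp_mulVec (P⁻¹)ᴴ (by rw [hPinv]; exact (inv_ne_zero hP.ne_zero).isUnit.star)
      (fun w : Fin n → ℂ => ∏ i, Complex.exp (-(star (w i) * ((b i)⁻¹ * w i)))),
    integral_fintype_prod_volume_eq_prod
      (f := fun i (w : ℂ) => Complex.exp (-(star w * ((b i)⁻¹ * w)))),
    Finset.prod_congr rfl fun i _ => integral_cexp_neg_inv_mul_normSq (d i),
    Finset.prod_mul_distrib, hPinv, hdetC]
  simp only [Finset.prod_const, Finset.card_univ, Fintype.card_fin, Complex.star_def,
    Complex.normSq_conj, map_inv₀, Complex.ofReal_inv, inv_inv]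
  ring
end

section
/- Let a, b ∈ ℂ have strictly positive real parts. Then, with log denoting the principal branch of the complex logarithm, log a − log b = −∫₀^∞ (e^{−ta} − e^{−tb}) · (1/t) dt, where the integrand extends continuously to t = 0 and the integral converges absolutely. -/
/-!
Fix `b` and put `F z = ∫₀^∞ (e^{-tz} - e^{-tb})/t dt` on the right half-plane. The mean value
inequality for `z ↦ e^{-tz}` bounds the integrand by `‖z - b‖ e^{-δt}`, where `δ` is the smaller of
the two real parts, so the integral converges absolutely. Differentiating under the integral
sign gives `F' z = -∫₀^∞ e^{-tz} dt = -1/z`. Hence `F + log` has zero derivative on the half-plane,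
which is open and connected, so it is constant there; since `F b = 0`, the constant is `log b`.
-/

open scoped Topology
open MeasureTheory Filter

lemma hasDerivAt_exp_neg_mul (t : ℝ) (z : ℂ) :
    HasDerivAt (fun z : ℂ => Complex.exp (-(t : ℂ) * z))
      (-(t : ℂ) * Complex.exp (-(t : ℂ) * z)) z := by
  have h := ((hasDerivAt_id z).const_mul (-(t : ℂ))).cexp
  simpa [mul_comm] using h

lemma norm_exp_neg_mul (t : ℝ) (z : ℂ) :
    ‖Complex.exp (-(t : ℂ) * z)‖ = Real.exp (-t * z.re) := by
  rw [Complex.norm_exp]; simp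

/-- The mean value inequality for `z ↦ e^{-tz}` on the half-plane `δ ≤ Re z`. -/
lemma norm_integrand_le {a b : ℂ} {δ : ℝ} (ha : δ ≤ a.re) (hb : δ ≤ b.re) {t : ℝ} (ht : 0 < t) :
    ‖(Complex.exp (-(t : ℂ) * a) - Complex.exp (-(t : ℂ) * b)) / (t : ℂ)‖
      ≤ ‖a - b‖ * Real.exp (-δ * t) := by
  have h := (convex_halfSpace_re_ge δ).norm_image_sub_le_of_norm_hasDerivWithin_le
    (f := fun z : ℂ => Complex.exp (-(t : ℂ) * z)) (C := t * Real.exp (-δ * t))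
    (fun z _ => (hasDerivAt_exp_neg_mul t z).hasDerivWithinAt)
    (fun z hz => by
      have hz : δ ≤ z.re := hz
      rw [norm_mul, norm_exp_neg_mul, norm_neg, Complex.norm_real, Real.norm_of_nonneg ht.le]
      exact mul_le_mul_of_nonneg_left (Real.exp_le_exp.2 (by nlinarith)) ht.le) hb ha
  rw [norm_div, Complex.norm_real, Real.norm_of_nonneg ht.le, div_le_iff₀ ht]
  linarith

lemma measurable_integrand (a b : ℂ) :
    Measurable
      (fun t : ℝ => (Complex.exp (-(t : ℂ) * a) - Complex.exp (-(t : ℂ) * b)) / (t : ℂ)) := by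
  fun_prop

lemma integrableOn_integrand {a b : ℂ} (ha : 0 < a.re) (hb : 0 < b.re) :
    IntegrableOn
      (fun t : ℝ => (Complex.exp (-(t : ℂ) * a) - Complex.exp (-(t : ℂ) * b)) / (t : ℂ))
      (Set.Ioi (0 : ℝ)) := by
  refine Integrable.mono'
    ((exp_neg_integrableOn_Ioi 0 (lt_min ha hb)).const_mul ‖a - b‖)
    (measurable_integrand a b).aestronglyMeasurable ?_
  filter_upwards [ae_restrict_mem measurableSet_Ioi] with t ht
  exact norm_integrand_le (min_le_left _ _) (min_le_right _ _) ht

/-- Differentiation under the integral sign: near `z` the `z`-derivative `-e^{-tz}` of the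
integrand is dominated by `e^{-t (Re z)/2}`. -/
lemma hasDerivAt_integral_integrand {b z : ℂ} (hb : 0 < b.re) (hz : 0 < z.re) :
    HasDerivAt
      (fun z : ℂ => ∫ t in Set.Ioi (0 : ℝ),
        (Complex.exp (-(t : ℂ) * z) - Complex.exp (-(t : ℂ) * b)) / (t : ℂ)) (-z⁻¹) z := by
  have hU : {w : ℂ | z.re / 2 < w.re} ∈ 𝓝 z :=
    (isOpen_lt continuous_const Complex.continuous_re).mem_nhds (half_lt_self hz)
  have h := (hasDerivAt_integral_of_dominated_loc_of_deriv_le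
    (μ := volume.restrict (Set.Ioi (0 : ℝ)))
    (F := fun (z : ℂ) (t : ℝ) =>
      (Complex.exp (-(t : ℂ) * z) - Complex.exp (-(t : ℂ) * b)) / (t : ℂ))
    (F' := fun (z : ℂ) (t : ℝ) => -Complex.exp (-(t : ℂ) * z))
    (bound := fun t => Real.exp (-(z.re / 2) * t)) hU
    (Eventually.of_forall fun w => (measurable_integrand w b).aestronglyMeasurable)
    (integrableOn_integrand hz hb)
    (by fun_prop)
    (by
      filter_upwards [ae_restrict_mem measurableSet_Ioi] with t ht w hw
      have ht : 0 < t := ht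
      have hw : z.re / 2 < w.re := hw
      rw [norm_neg, norm_exp_neg_mul]
      exact Real.exp_le_exp.2 (by nlinarith))
    (exp_neg_integrableOn_Ioi 0 (half_pos hz))
    (by
      filter_upwards [ae_restrict_mem measurableSet_Ioi] with t ht w _
      have ht : (t : ℂ) ≠ 0 := Complex.ofReal_ne_zero.2 (ne_of_gt ht)
      have h := ((hasDerivAt_exp_neg_mul t w).sub_const
        (Complex.exp (-(t : ℂ) * b))).div_const (t : ℂ)
      exact h.congr_deriv (by field_simp))).2
  refine h.congr_deriv ?_
  have h2 := integral_exp_mul_complex_Ioi (a := -z) (by simpa using hz) 0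
  have h3 : ∀ t : ℝ, -(t : ℂ) * z = -z * t := fun t => by ring
  simp only [h3, integral_neg, h2]
  simp

/-- **Integral representation of the complex logarithm** (equation (A.8)): for
`a, b ∈ ℂ` with strictly positive real parts,
`log a − log b = −∫₀^∞ (e^{−ta} − e^{−tb})/t dt`; the integrand extends continuously
to `t = 0` (with value `b − a`) and the integral converges absolutely. -/
theorem log_sub_log_eq_integral (a b : ℂ) (ha : 0 < a.re) (hb : 0 < b.re) :
    Tendsto (fun t : ℝ => (Complex.exp (-(t : ℂ) * a) - Complex.exp (-(t : ℂ) * b)) / (t : ℂ))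
        (𝓝[>] (0 : ℝ)) (𝓝 (b - a)) ∧
      IntegrableOn
        (fun t : ℝ => (Complex.exp (-(t : ℂ) * a) - Complex.exp (-(t : ℂ) * b)) / (t : ℂ))
        (Set.Ioi (0 : ℝ)) ∧
      Complex.log a - Complex.log b
        = -∫ t in Set.Ioi (0 : ℝ),
            (Complex.exp (-(t : ℂ) * a) - Complex.exp (-(t : ℂ) * b)) / (t : ℂ) := by
  refine ⟨?_, integrableOn_integrand ha hb, ?_⟩
  · -- The limit is the derivative at `0` of `t ↦ e^{-ta} - e^{-tb}`, which vanishes at `0`.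
    have hd (c : ℂ) : HasDerivAt (fun t : ℝ => Complex.exp (-(t : ℂ) * c)) (-c) 0 := by
      have h := (((hasDerivAt_id (0 : ℝ)).ofReal_comp.neg).mul_const c).cexp
      simpa using h
    have h := ((hd a).sub (hd b)).tendsto_slope_zero_right
    rw [show b - a = -a - -b by ring]
    refine h.congr fun t => ?_
    simp [div_eq_inv_mul]
  · have hconst := (isOpen_lt continuous_const Complex.continuous_re).is_const_of_deriv_eq_zero
      (𝕜 := ℂ) (s := {z : ℂ | 0 < z.re})
      (f := fun z => (∫ t in Set.Ioi (0 : ℝ),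
        (Complex.exp (-(t : ℂ) * z) - Complex.exp (-(t : ℂ) * b)) / (t : ℂ)) + Complex.log z)
      (convex_halfSpace_re_gt 0).isPreconnected
      (fun z hz => ((hasDerivAt_integral_integrand hb hz).add
        (Complex.hasDerivAt_log (Or.inl hz))).differentiableAt.differentiableWithinAt)
      (fun z hz => by
        have h := ((hasDerivAt_integral_integrand hb hz).add
          (Complex.hasDerivAt_log (Or.inl hz))).deriv
        rw [neg_add_cancel] at h
        exact h) ha hb
    simp only [sub_self, zero_div, integral_zero, zero_add] at hconst
    rw [← hconst]
    ring
end

section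
/- Let n ≥ 1 and let V : {1,…,n}×{1,…,n} → [0,∞) be symmetric. Set ζ(i,j) = e^{−V(i,j)/2} − 1 for i ≠ j. Then the tree-graph bound holds: |∑_{G} ∏_{{i,j}∈E(G)} ζ(i,j)| ≤ ∑_{T} ∏_{{i,j}∈E(T)} |ζ(i,j)|, where the sum on the left is over all connected simple graphs G on the vertex set {1,…,n}, the sum on the right is over all trees T on {1,…,n}, and the products run over the edge sets (empty products equal 1). -/
/-!
The bound is proved by deletion–contraction of edges. For a forest `F` and a finite set `R` of
edges, let `S(F, R)` be the sum of `∏_{e ∈ A} w e` over the `A ⊆ R` for which `F ∪ A` is connected,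
and `T(F, R)` the sum of `∏_{e ∈ A} |w e|` over the `A ⊆ R` for which `F ∪ A` is a tree.
If `-1 ≤ w ≤ 0`, then `|S(F, R)| ≤ T(F, R)` by induction on `R` (`abs_connSum_le_treeSum`).
For `R = ∅` both sides agree, since a connected forest is a tree. When an edge `e` is added to `R`,
`S(F, R ∪ {e}) = S(F, R) + w e * S(F ∪ {e}, R)`.
* If `F` does not connect the ends of `e`, then `F ∪ {e}` is a forest, and the triangle inequality
  together with the same recursion for `T` finishes the step.
* If `F` connects the ends of `e`, then `e` does not affect connectedness, so
  `S(F, R ∪ {e}) = (1 + w e) * S(F, R)` with `|1 + w e| ≤ 1`, while `T` can only grow.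

The theorem is the case `F = ⊥`, with `R` the set of all edges of the complete graph.
-/

open scoped BigOperators Classical

noncomputable section

/-- The product of `f` over the edges of a simple graph `G`, each edge `{i,j}` with
`i < j` counted once. -/
def edgeProd {n : ℕ} (G : SimpleGraph (Fin n)) (f : Fin n → Fin n → ℝ) : ℝ :=
  ∏ e ∈ Finset.univ.filter (fun e : Fin n × Fin n => e.1 < e.2 ∧ G.Adj e.1 e.2),
    f e.1 e.2

/-- The number of edges of a simple graph on `Fin n`. -/
def edgeCount {n : ℕ} (G : SimpleGraph (Fin n)) : ℕ :=
  (Finset.univ.filter (fun e : Fin n × Fin n => e.1 < e.2 ∧ G.Adj e.1 e.2)).card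

namespace TreeGraph

variable {α : Type*}

/-- The sum of `∏_{e ∈ A} w e` over the sets `A ⊆ R` of edges for which `F ∪ A` is connected.
Diagonal elements of `A` are ignored by `SimpleGraph.fromEdgeSet`. -/
def connSum (w : Sym2 α → ℝ) (F : SimpleGraph α) (R : Finset (Sym2 α)) : ℝ :=
  ∑ A ∈ R.powerset,
    if (F ⊔ SimpleGraph.fromEdgeSet (A : Set (Sym2 α))).Connected then ∏ e ∈ A, w e else 0

/-- The sum of `∏_{e ∈ A} |w e|` over the sets `A ⊆ R` of edges for which `F ∪ A` is a tree. -/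
def treeSum (w : Sym2 α → ℝ) (F : SimpleGraph α) (R : Finset (Sym2 α)) : ℝ :=
  ∑ A ∈ R.powerset,
    if (F ⊔ SimpleGraph.fromEdgeSet (A : Set (Sym2 α))).IsTree then ∏ e ∈ A, |w e| else 0

theorem sup_fromEdgeSet_insert (F : SimpleGraph α) (u v : α) (A : Finset (Sym2 α)) :
    F ⊔ SimpleGraph.fromEdgeSet ((insert s(u, v) A : Finset (Sym2 α)) : Set (Sym2 α))
      = (F ⊔ SimpleGraph.edge u v) ⊔ SimpleGraph.fromEdgeSet (A : Set (Sym2 α)) := by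
  rw [Finset.coe_insert, Set.insert_eq, SimpleGraph.fromEdgeSet_union, sup_assoc]
  rfl

theorem connSum_insert (w : Sym2 α → ℝ) (F : SimpleGraph α) (u v : α) (R : Finset (Sym2 α))
    (h : s(u, v) ∉ R) :
    connSum w F (insert s(u, v) R)
      = connSum w F R + w s(u, v) * connSum w (F ⊔ SimpleGraph.edge u v) R := by
  unfold connSum
  rw [Finset.sum_powerset_insert h, Finset.mul_sum]
  congr 1
  refine Finset.sum_congr rfl fun A hA => ?_
  have hA' : s(u, v) ∉ A := fun h' => h (Finset.mem_powerset.1 hA h')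
  rw [sup_fromEdgeSet_insert, Finset.prod_insert hA', mul_ite, mul_zero]

theorem treeSum_insert (w : Sym2 α → ℝ) (F : SimpleGraph α) (u v : α) (R : Finset (Sym2 α))
    (h : s(u, v) ∉ R) :
    treeSum w F (insert s(u, v) R)
      = treeSum w F R + |w s(u, v)| * treeSum w (F ⊔ SimpleGraph.edge u v) R := by
  unfold treeSum
  rw [Finset.sum_powerset_insert h, Finset.mul_sum]
  congr 1
  refine Finset.sum_congr rfl fun A hA => ?_
  have hA' : s(u, v) ∉ A := fun h' => h (Finset.mem_powerset.1 hA h')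
  rw [sup_fromEdgeSet_insert, Finset.prod_insert hA', mul_ite, mul_zero]

theorem treeSum_nonneg (w : Sym2 α → ℝ) (F : SimpleGraph α) (R : Finset (Sym2 α)) :
    0 ≤ treeSum w F R := by
  refine Finset.sum_nonneg fun A _ => ?_
  split_ifs
  · exact Finset.prod_nonneg fun e _ => abs_nonneg _
  · exact le_rfl

/-- Adding an edge whose ends are already connected does not affect connectedness. -/
theorem connected_sup_edge_iff {G : SimpleGraph α} {u v : α} (h : G.Reachable u v) :
    (G ⊔ SimpleGraph.edge u v).Connected ↔ G.Connected := by
  refine ⟨fun hc => ?_, fun hc => hc.mono le_sup_left⟩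
  have key : ∀ x y, (G ⊔ SimpleGraph.edge u v).Adj x y → G.Reachable x y := by
    intro x y hxy
    rw [SimpleGraph.sup_adj, SimpleGraph.edge_adj] at hxy
    rcases hxy with hxy | ⟨⟨rfl, rfl⟩ | ⟨rfl, rfl⟩, -⟩
    · exact hxy.reachable
    · exact h
    · exact h.symm
  have := hc.nonempty
  refine ⟨fun x y => ?_⟩
  obtain ⟨p⟩ := hc.preconnected x y
  induction p with
  | nil => exact SimpleGraph.Reachable.refl _
  | cons hadj _ ih => exact (key _ _ hadj).trans ih

theorem connSum_sup_edge (w : Sym2 α → ℝ) {F : SimpleGraph α} {u v : α} (h : F.Reachable u v)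
    (R : Finset (Sym2 α)) : connSum w (F ⊔ SimpleGraph.edge u v) R = connSum w F R := by
  refine Finset.sum_congr rfl fun A _ => ?_
  rw [sup_right_comm, connected_sup_edge_iff (h.mono le_sup_left)]

/-- The tree-graph bound relative to a forest `F` of edges that are already chosen. -/
theorem abs_connSum_le_treeSum (w : Sym2 α → ℝ) (h0 : ∀ e, w e ≤ 0) (h1 : ∀ e, -1 ≤ w e)
    (R : Finset (Sym2 α)) :
    ∀ F : SimpleGraph α, F.IsAcyclic → |connSum w F R| ≤ treeSum w F R := by
  induction R using Finset.induction_on with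
  | empty =>
    intro F hF
    by_cases hc : F.Connected
    · have ht : F.IsTree := ⟨hc, hF⟩
      simp [connSum, treeSum, hc, ht]
    · have ht : ¬ F.IsTree := fun h => hc h.connected
      simp [connSum, treeSum, hc, ht]
  | insert e R he ih =>
    intro F hF
    induction e using Sym2.ind with
    | _ u v =>
      rw [connSum_insert w F u v R he, treeSum_insert w F u v R he]
      by_cases hr : F.Reachable u v
      · rw [connSum_sup_edge w hr]
        have hS : connSum w F R + w s(u, v) * connSum w F R
            = (1 + w s(u, v)) * connSum w F R := by ring
        have hw : |1 + w s(u, v)| ≤ 1 := by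
          rw [abs_le]
          constructor <;> linarith [h0 s(u, v), h1 s(u, v)]
        rw [hS, abs_mul]
        calc |1 + w s(u, v)| * |connSum w F R| ≤ 1 * |connSum w F R| := by gcongr
          _ ≤ treeSum w F R := by rw [one_mul]; exact ih F hF
          _ ≤ _ := le_add_of_nonneg_right (mul_nonneg (abs_nonneg _) (treeSum_nonneg _ _ _))
      · refine (abs_add_le _ _).trans ?_
        rw [abs_mul]
        gcongr
        · exact ih F hF
        · exact ih _ (hF.sup_edge_of_not_reachable hr)

variable {n : ℕ}

/-- The ordered pairs indexing the edges in `edgeProd` and `edgeCount` correspond bijectively to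
the unordered edges. -/
theorem image_pairs_eq (G : SimpleGraph (Fin n)) :
    (Finset.univ.filter (fun e : Fin n × Fin n => e.1 < e.2 ∧ G.Adj e.1 e.2)).image
        (fun e => s(e.1, e.2)) = Finset.univ.filter (fun e => e ∈ G.edgeSet) := by
  ext e
  induction e using Sym2.ind with
  | _ u v =>
    simp only [Finset.mem_image, Finset.mem_filter, Finset.mem_univ, true_and, Prod.exists,
      SimpleGraph.mem_edgeSet]
    constructor
    · rintro ⟨a, b, ⟨-, hab⟩, h⟩
      rw [← SimpleGraph.mem_edgeSet, ← h]
      exact hab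
    · intro h
      rcases lt_or_gt_of_ne h.ne with hlt | hlt
      · exact ⟨u, v, ⟨hlt, h⟩, rfl⟩
      · exact ⟨v, u, ⟨hlt, h.symm⟩, Sym2.eq_swap⟩

theorem injOn_pairs (G : SimpleGraph (Fin n)) :
    Set.InjOn (fun e : Fin n × Fin n => s(e.1, e.2))
      (Finset.univ.filter (fun e : Fin n × Fin n => e.1 < e.2 ∧ G.Adj e.1 e.2) :
        Finset (Fin n × Fin n)) := by
  rintro ⟨a, b⟩ hab ⟨c, d⟩ hcd h
  simp only [Finset.coe_filter, Finset.mem_univ, true_and, Set.mem_ofPred_eq] at hab hcd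
  rcases Sym2.eq_iff.1 h with ⟨rfl, rfl⟩ | ⟨rfl, rfl⟩
  · rfl
  · exact absurd hab.1 hcd.1.not_gt

theorem edgeProd_eq (G : SimpleGraph (Fin n)) (w : Sym2 (Fin n) → ℝ) :
    edgeProd G (fun i j => w s(i, j)) = ∏ e ∈ Finset.univ.filter (fun e => e ∈ G.edgeSet), w e := by
  rw [← image_pairs_eq, Finset.prod_image (injOn_pairs G)]
  rfl

theorem edgeCount_eq (G : SimpleGraph (Fin n)) : edgeCount G = Nat.card G.edgeSet := by
  unfold edgeCount
  rw [← Finset.card_image_of_injOn (injOn_pairs G), image_pairs_eq, Nat.card_eq_fintype_card,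
    Fintype.card_subtype]

/-- Graphs correspond to their edge sets, i.e. to the sets of non-diagonal unordered pairs. -/
theorem sum_graphs_eq (P : SimpleGraph (Fin n) → Prop) (w : Sym2 (Fin n) → ℝ) :
    ∑ G ∈ Finset.univ.filter P, edgeProd G (fun i j => w s(i, j))
      = ∑ A ∈ (Finset.univ.filter (fun e : Sym2 (Fin n) => ¬ e.IsDiag)).powerset,
          if P (⊥ ⊔ SimpleGraph.fromEdgeSet (A : Set (Sym2 (Fin n)))) then ∏ e ∈ A, w e else 0 := by
  rw [Finset.sum_filter]
  refine Finset.sum_bij' (fun G _ => Finset.univ.filter (fun e => e ∈ G.edgeSet))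
    (fun A _ => SimpleGraph.fromEdgeSet (A : Set (Sym2 (Fin n)))) ?_ ?_ ?_ ?_ ?_
  · intro G _
    rw [Finset.mem_powerset]
    intro e he
    simp only [Finset.mem_filter, Finset.mem_univ, true_and] at he ⊢
    exact G.not_isDiag_of_mem_edgeSet he
  · intros
    exact Finset.mem_univ _
  · intro G _
    simp
  · intro A hA
    ext e
    have hd : e ∈ A → ¬ e.IsDiag := fun he => by
      simpa using Finset.mem_powerset.1 hA he
    simpa [SimpleGraph.edgeSet_fromEdgeSet] using hd
  · intro G _
    simp [edgeProd_eq]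

end TreeGraph

open TreeGraph in
/-- **Tree-graph bound for the Ursell function** (Lemma 5.4): for a symmetric
nonnegative two-body interaction `V` and `ζ(i,j) = e^{−V(i,j)/2} − 1`,
`|∑_{G connected} ∏_{{i,j}∈G} ζ(i,j)| ≤ ∑_{T tree} ∏_{{i,j}∈T} |ζ(i,j)|`. -/
theorem tree_graph_bound (n : ℕ) (hn : 1 ≤ n) (V : Fin n → Fin n → ℝ)
    (hsymm : ∀ i j, V i j = V j i) (hnonneg : ∀ i j, 0 ≤ V i j) :
    |∑ G ∈ Finset.univ.filter (fun G : SimpleGraph (Fin n) => G.Connected),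
        edgeProd G (fun i j => Real.exp (-(V i j) / 2) - 1)|
      ≤ ∑ T ∈ Finset.univ.filter
            (fun T : SimpleGraph (Fin n) => T.Connected ∧ edgeCount T = n - 1),
          edgeProd T (fun i j => |Real.exp (-(V i j) / 2) - 1|) := by
  let w : Sym2 (Fin n) → ℝ := Sym2.lift
    ⟨fun i j => Real.exp (-(V i j) / 2) - 1, fun i j => by simp only [hsymm i j]⟩
  have h0 : ∀ e, w e ≤ 0 := by
    intro e
    induction e using Sym2.ind with
    | _ u v =>
      have : Real.exp (-(V u v) / 2) ≤ 1 := Real.exp_le_one_iff.2 (by linarith [hnonneg u v])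
      exact sub_nonpos.2 this
  have h1 : ∀ e, -1 ≤ w e := by
    intro e
    induction e using Sym2.ind with
    | _ u v =>
      have : 0 < Real.exp (-(V u v) / 2) := Real.exp_pos _
      change -1 ≤ Real.exp (-(V u v) / 2) - 1
      linarith
  have htree : ∀ T : SimpleGraph (Fin n),
      (T.Connected ∧ edgeCount T = n - 1) ↔ T.IsTree := by
    intro T
    rw [SimpleGraph.isTree_iff_connected_and_card, edgeCount_eq, Nat.card_fin]
    refine and_congr_right fun _ => ?_
    omega
  have main := abs_connSum_le_treeSum w h0 h1
    (Finset.univ.filter (fun e : Sym2 (Fin n) => ¬ e.IsDiag)) ⊥ SimpleGraph.isAcyclic_bot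
  unfold connSum treeSum at main
  rw [← sum_graphs_eq (fun G => G.Connected) w,
    ← sum_graphs_eq (fun G => G.IsTree) (fun e => |w e|)] at main
  simp only [htree]
  -- The two sides differ only in decidability instances and in the unfolding of `w`.
  convert main <;> rfl
end
end
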